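/- arXiv:1507.04903 — 8 statements merged into one kernel-verified Lean document; each statement's English description precedes it below -/
import Mathlib

section
/- Equip ℝ³ with the 3-dimensional causal order: (u,v,t) ⊑ (u',v',t') iff √((u'−u)² + (v'−v)²) ≤ t'−t. Then no pair of incomparable points has a join or a meet: if x, y ∈ ℝ³ satisfy ¬(x ⊑ y) and ¬(y ⊑ x), then there is no z ∈ ℝ³ that is a least upper bound of {x, y} (i.e., x ⊑ z, y ⊑ z, and z ⊑ w for every w with x ⊑ w and y ⊑ w), and there is no z ∈ ℝ³ that is a greatest lower bound of {x, y}. -/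
/-- The 3-dimensional causal order on ℝ³ (coordinates `(u, v, t)` with `u, v`
spatial and `t` time): `(u,v,t) ⊑ (u',v',t')` iff `√((u'−u)² + (v'−v)²) ≤ t'−t`. -/
def causalOrder3 (p q : ℝ × ℝ × ℝ) : Prop :=
  Real.sqrt ((q.1 - p.1) ^ 2 + (q.2.1 - p.2.1) ^ 2) ≤ q.2.2 - p.2.2

theorem c3_iff (p q : ℝ × ℝ × ℝ) : causalOrder3 p q ↔
    0 ≤ q.2.2 - p.2.2 ∧ (q.1 - p.1) ^ 2 + (q.2.1 - p.2.1) ^ 2 ≤ (q.2.2 - p.2.2) ^ 2 := by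
  unfold causalOrder3
  exact Real.sqrt_le_iff

theorem c3_neg (p q : ℝ × ℝ × ℝ) : causalOrder3 p q ↔ causalOrder3 (-q) (-p) := by
  rw [c3_iff, c3_iff]
  simp only [Prod.fst_neg, Prod.snd_neg]
  ring_nf

theorem c3_tri (p q p' q' s r : ℝ) (hs : 0 ≤ s) (hr : 0 ≤ r) (h1 : p ^ 2 + q ^ 2 ≤ s ^ 2)
    (h2 : p' ^ 2 + q' ^ 2 ≤ r ^ 2) : (p + p') ^ 2 + (q + q') ^ 2 ≤ (s + r) ^ 2 := by
  have h3 : p * p' + q * q' ≤ s * r := by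
    refine abs_le_of_sq_le_sq' ?_ (mul_nonneg hs hr) |>.2
    have := mul_le_mul h1 h2 (by positivity) (by positivity)
    nlinarith [sq_nonneg (p * q' - q * p')]
  nlinarith

theorem c3_nojoin (x y : ℝ × ℝ × ℝ)
    (hxy : ¬ causalOrder3 x y) (hyx : ¬ causalOrder3 y x) :
    ¬ ∃ z : ℝ × ℝ × ℝ, causalOrder3 x z ∧ causalOrder3 y z ∧
        ∀ w : ℝ × ℝ × ℝ, causalOrder3 x w → causalOrder3 y w → causalOrder3 z w := by
  rintro ⟨⟨z1, z2, z3⟩, hxz, hyz, hz⟩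
  obtain ⟨x1, x2, x3⟩ := x
  obtain ⟨y1, y2, y3⟩ := y
  unfold causalOrder3 at hxy hyx
  simp only [not_le] at hxy hyx
  rw [show (x1 - y1) ^ 2 + (x2 - y2) ^ 2 = (y1 - x1) ^ 2 + (y2 - x2) ^ 2 by ring] at hyx
  have hD2 := Real.sq_sqrt (show 0 ≤ (y1 - x1) ^ 2 + (y2 - x2) ^ 2 by positivity)
  set D := Real.sqrt ((y1 - x1) ^ 2 + (y2 - x2) ^ 2) with hD
  have hDpos : 0 < D := by linarith
  obtain ⟨c, hc⟩ : ∃ c, y1 - x1 = D * c := ⟨(y1 - x1) / D, by field_simp⟩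
  obtain ⟨s, hs⟩ : ∃ s, y2 - x2 = D * s := ⟨(y2 - x2) / D, by field_simp⟩
  have hcs : c ^ 2 + s ^ 2 = 1 := by
    rw [hc, hs] at hD2
    have : D ^ 2 * (c ^ 2 + s ^ 2 - 1) = 0 := by linarith
    have h2 : D ^ 2 ≠ 0 := by positivity
    have := (mul_eq_zero.mp this).resolve_left h2
    linarith
  clear_value D
  obtain ⟨A, hA⟩ : ∃ A, A = (D + (y3 - x3)) / 2 := ⟨_, rfl⟩
  obtain ⟨B, hB⟩ : ∃ B, B = (D - (y3 - x3)) / 2 := ⟨_, rfl⟩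
  have hA0 : 0 < A := by linarith
  have hB0 : 0 < B := by linarith
  have hDAB : D = A + B := by linarith
  obtain rfl : y1 = x1 + (A + B) * c := by rw [← hDAB]; linarith
  obtain rfl : y2 = x2 + (A + B) * s := by rw [← hDAB]; linarith
  obtain rfl : y3 = x3 + A - B := by linarith
  clear hA hB hc hs hD2 hD hxy hyx
  subst hDAB
  simp only [c3_iff] at hxz hyz hz
  have h0 := hz (x1 + A * c, x2 + A * s, x3 + A)
    ⟨by simp only; linarith, by simp only; linear_combination A ^ 2 * hcs⟩
    ⟨by simp only; linarith, by simp only; linear_combination B ^ 2 * hcs⟩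
  simp only at h0 hxz hyz
  have htri := c3_tri _ _ (x1 + (A + B) * c - z1) (x2 + (A + B) * s - z2) _ _ hxz.1 hyz.1 hxz.2
    (by linarith [hyz.2])
  have h5 : (A + B) ^ 2 ≤ (z3 - x3 + (z3 - (x3 + A - B))) ^ 2 := by
    linear_combination htri - (A + B) ^ 2 * hcs
  have h6 := le_of_sq_le_sq h5 (by linarith)
  obtain rfl : z3 = x3 + A := by linarith
  have h7 := h0.2
  have e1 : x1 + A * c - z1 = 0 := by
    apply pow_eq_zero_iff (two_ne_zero) |>.1
    nlinarith [sq_nonneg (x1 + A * c - z1), sq_nonneg (x2 + A * s - z2)]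
  have e2 : x2 + A * s - z2 = 0 := by
    apply pow_eq_zero_iff (two_ne_zero) |>.1
    nlinarith [sq_nonneg (x1 + A * c - z1), sq_nonneg (x2 + A * s - z2)]
  obtain rfl : z1 = x1 + A * c := by linarith
  obtain rfl : z2 = x2 + A * s := by linarith
  have hm : 0 < min A B := lt_min hA0 hB0
  have hmA := min_le_left A B
  have hmB := min_le_right A B
  generalize min A B = m at hm hmA hmB
  obtain ⟨k, hk⟩ : ∃ k : ℝ, k ^ 2 = 1 + 2 * m :=
    ⟨Real.sqrt (1 + 2 * m), Real.sq_sqrt (by linarith)⟩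
  have h8 := hz (x1 + A * c - k * s, x2 + A * s + k * c, x3 + A + 1)
    ⟨by simp only; linarith, by
      simp only
      linear_combination (A ^ 2 + k ^ 2) * hcs + hk + 2 * hmA⟩
    ⟨by simp only; linarith, by
      simp only
      linear_combination (B ^ 2 + k ^ 2) * hcs + hk + 2 * hmB⟩
  have h9 := h8.2
  simp only at h9
  have : k ^ 2 ≤ 1 := by linear_combination h9 - k ^ 2 * hcs
  linarith

/-- In three-dimensional Minkowski spacetime, no pair of causally incomparable
points has a join or a meet with respect to the causal order. -/
theorem no_join_no_meet_of_incomparable (x y : ℝ × ℝ × ℝ)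
    (hxy : ¬ causalOrder3 x y) (hyx : ¬ causalOrder3 y x) :
    (¬ ∃ z : ℝ × ℝ × ℝ, causalOrder3 x z ∧ causalOrder3 y z ∧
        ∀ w : ℝ × ℝ × ℝ, causalOrder3 x w → causalOrder3 y w → causalOrder3 z w) ∧
    (¬ ∃ z : ℝ × ℝ × ℝ, causalOrder3 z x ∧ causalOrder3 z y ∧
        ∀ w : ℝ × ℝ × ℝ, causalOrder3 w x → causalOrder3 w y → causalOrder3 w z) := by
  refine ⟨c3_nojoin x y hxy hyx, ?_⟩
  rintro ⟨z, hzx, hzy, hz⟩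
  refine c3_nojoin (-x) (-y) (fun h => hyx ((c3_neg _ _).2 h)) (fun h => hxy ((c3_neg _ _).2 h))
    ⟨-z, (c3_neg _ _).1 hzx, (c3_neg _ _).1 hzy, fun w h1 h2 => ?_⟩
  rw [c3_neg, neg_neg] at h1 h2 ⊢
  exact hz _ h1 h2
end

section
/- Let a < b be real numbers and let S be a partition of the open interval (a,b) into closed segments: the members of S are pairwise disjoint, their union is (a,b), and each member is of the form [c,d] for some c ≤ d. Then S contains uncountably many singleton members, i.e., the set { s ∈ S : s = {x} for some x } is uncountable. -/
/-- If `S` is a partition of an open interval `(a,b)` (with `a < b`) into closed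
segments `[c,d]` (`c ≤ d`), then `S` contains uncountably many singleton members. -/
theorem uncountably_many_singletons_of_partition_Ioo (a b : ℝ) (hab : a < b)
    (S : Set (Set ℝ))
    (hdisj : S.Pairwise Disjoint)
    (hcover : ⋃₀ S = Set.Ioo a b)
    (hseg : ∀ s ∈ S, ∃ c d : ℝ, c ≤ d ∧ s = Set.Icc c d) :
    ¬ ({s ∈ S | ∃ x : ℝ, s = {x}}).Countable := by
  intro hcount
  have hsub : ∀ c d, Set.Icc c d ∈ S → c ≤ d → a < c ∧ d < b := by
    intro c d h hcd
    have h1 : c ∈ Set.Ioo a b := hcover ▸ ⟨_, h, Set.left_mem_Icc.2 hcd⟩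
    have h2 : d ∈ Set.Ioo a b := hcover ▸ ⟨_, h, Set.right_mem_Icc.2 hcd⟩
    exact ⟨h1.1, h2.2⟩
  have hex : ∀ x, a < x → x < b → ∃ c d, Set.Icc c d ∈ S ∧ c ≤ x ∧ x ≤ d := by
    intro x h1 h2
    have hx : x ∈ ⋃₀ S := hcover ▸ ⟨h1, h2⟩
    obtain ⟨s, hs, hxs⟩ := hx
    obtain ⟨c, d, _, rfl⟩ := hseg s hs
    exact ⟨c, d, hs, hxs.1, hxs.2⟩
  have huniq : ∀ x c d c' d', Set.Icc c d ∈ S → Set.Icc c' d' ∈ S → c ≤ x → x ≤ d →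
      c' ≤ x → x ≤ d' → c = c' ∧ d = d' := by
    intro x c d c' d' h h' h1 h2 h3 h4
    by_cases he : Set.Icc c d = Set.Icc c' d'
    · exact (Set.Icc_eq_Icc_iff (h1.trans h2)).1 he
    · exact absurd (⟨h3, h4⟩ : x ∈ Set.Icc c' d')
        (Set.disjoint_left.1 (hdisj h h' he) ⟨h1, h2⟩)
  have hScount : S.Countable := by
    have h2 : ({s ∈ S | ¬ ∃ x : ℝ, s = {x}}).Countable := by
      refine Set.PairwiseDisjoint.countable_of_nonempty_interior (s := id) ?_ ?_
      · intro s hs t ht hst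
        exact hdisj hs.1 ht.1 hst
      · rintro s ⟨hs, hn⟩
        obtain ⟨c, d, hcd, rfl⟩ := hseg s hs
        have : c < d := lt_of_le_of_ne hcd (by rintro rfl; exact hn ⟨c, by simp⟩)
        simpa using this
    refine (hcount.union h2).mono ?_
    intro s hs
    by_cases h : ∃ x : ℝ, s = {x}
    · exact Or.inl ⟨hs, h⟩
    · exact Or.inr ⟨hs, h⟩
  let E : Set ℝ := Set.Icc a b ∩ (⋃ s ∈ S, interior s)ᶜ
  have hE : ∀ x, x ∈ E ↔ (a ≤ x ∧ x ≤ b) ∧ ∀ c d, Set.Icc c d ∈ S → ¬ (c < x ∧ x < d) := by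
    intro x
    simp only [E, Set.mem_inter_iff, Set.mem_Icc, Set.mem_compl_iff, Set.mem_iUnion, not_exists]
    refine and_congr_right fun _ => ⟨fun h c d hs hx => h _ hs ?_, fun h s hs hx => ?_⟩
    · rw [interior_Icc]; exact hx
    · obtain ⟨c, d, hcd, rfl⟩ := hseg s hs
      rw [interior_Icc] at hx
      exact h c d hs hx
  have hclosed : IsClosed E :=
    isClosed_Icc.inter (isOpen_biUnion fun s _ => isOpen_interior).isClosed_compl
  have hEcount : E.Countable := by
    have : (({a, b} : Set ℝ) ∪ ⋃ s ∈ S, frontier s).Countable := by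
      refine Set.Countable.union (Set.toFinite _).countable (hScount.biUnion ?_)
      intro s hs
      obtain ⟨c, d, hcd, rfl⟩ := hseg s hs
      rw [frontier_Icc hcd]
      exact (Set.toFinite _).countable
    refine this.mono ?_
    intro x hx
    obtain ⟨⟨h1, h2⟩, h3⟩ := (hE x).1 hx
    rcases h1.eq_or_lt with h1 | h1
    · left; simp [h1]
    rcases h2.eq_or_lt with h2 | h2
    · left; simp [h2]
    obtain ⟨c, d, hs, hc, hd⟩ := hex x h1 h2
    right
    refine Set.mem_biUnion hs ?_
    rw [frontier_Icc (hc.trans hd)]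
    have := h3 c d hs
    grind
  have hright : ∀ x ∈ E, x < b → (∀ d, Set.Icc x d ∈ S → ¬ x < d) → ∀ ε > 0,
      ∃ y ∈ E, x < y ∧ y < x + ε := by
    intro x hx hxb hn ε hε
    obtain ⟨⟨h1, h2⟩, h3⟩ := (hE x).1 hx
    obtain ⟨z, hz1, hz2⟩ := exists_between (lt_min hxb (by linarith : x < x + ε))
    obtain ⟨hz2, hz3⟩ := lt_min_iff.1 hz2
    obtain ⟨c, d, hs, hc, hd⟩ := hex z (by linarith) hz2
    obtain ⟨hac, hdb⟩ := hsub c d hs (hc.trans hd)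
    have hxc : x < c := by
      by_contra hcx
      rcases (not_lt.1 hcx).eq_or_lt with h | h
      · subst h; exact hn d hs (by linarith)
      · exact h3 c d hs ⟨h, by linarith⟩
    refine ⟨c, (hE c).2 ⟨⟨by linarith, by linarith⟩, ?_⟩, hxc, by linarith⟩
    rintro c' d' hs' ⟨h4, h5⟩
    have := huniq c c d c' d' hs hs' le_rfl (by linarith) h4.le h5.le
    linarith [this.1]
  have hleft : ∀ x ∈ E, a < x → (∀ c, Set.Icc c x ∈ S → ¬ c < x) → ∀ ε > 0,
      ∃ y ∈ E, y < x ∧ x - ε < y := by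
    intro x hx hxb hn ε hε
    obtain ⟨⟨h1, h2⟩, h3⟩ := (hE x).1 hx
    obtain ⟨z, hz2, hz1⟩ := exists_between (max_lt hxb (by linarith : x - ε < x))
    obtain ⟨hz2, hz3⟩ := max_lt_iff.1 hz2
    obtain ⟨c, d, hs, hc, hd⟩ := hex z hz2 (by linarith)
    obtain ⟨hac, hdb⟩ := hsub c d hs (hc.trans hd)
    have hxc : d < x := by
      by_contra hcx
      rcases (not_lt.1 hcx).eq_or_lt with h | h
      · subst h; exact hn c hs (by linarith)
      · exact h3 c d hs ⟨by linarith, h⟩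
    refine ⟨d, (hE d).2 ⟨⟨by linarith, by linarith⟩, ?_⟩, hxc, by linarith⟩
    rintro c' d' hs' ⟨h4, h5⟩
    have := huniq d c d c' d' hs hs' (by linarith) le_rfl h4.le h5.le
    linarith [this.2]
  have hacc : Preperfect E := by
    intro x hx
    rw [accPt_iff_nhds]
    intro U hU
    obtain ⟨ε, hε, hball⟩ := Metric.mem_nhds_iff.1 hU
    rw [Real.ball_eq_Ioo] at hball
    obtain ⟨⟨h1, h2⟩, h3⟩ := (hE x).1 hx
    by_cases hR : x < b ∧ ∀ d, Set.Icc x d ∈ S → ¬ x < d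
    · obtain ⟨y, hy, h4, h5⟩ := hright x hx hR.1 hR.2 ε hε
      exact ⟨y, ⟨hball ⟨by linarith, h5⟩, hy⟩, h4.ne'⟩
    · have hL : a < x ∧ ∀ c, Set.Icc c x ∈ S → ¬ c < x := by
        by_cases hxb : x < b
        · have : ∃ d, Set.Icc x d ∈ S ∧ x < d := by
            by_contra hcon
            exact hR ⟨hxb, fun d hd hlt => hcon ⟨d, hd, hlt⟩⟩
          obtain ⟨d, hs, hd⟩ := this
          refine ⟨(hsub x d hs hd.le).1, fun c hc hlt => ?_⟩
          have := huniq x x d c x hs hc le_rfl hd.le hlt.le le_rfl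
          linarith [this.1]
        · refine ⟨by linarith, fun c hc hlt => ?_⟩
          exact hxb (hsub c x hc hlt.le).2
      obtain ⟨y, hy, h4, h5⟩ := hleft x hx hL.1 hL.2 ε hε
      exact ⟨y, ⟨hball ⟨h5, by linarith⟩, hy⟩, h4.ne⟩
  have hne : E.Nonempty := by
    refine ⟨a, (hE a).2 ⟨⟨le_rfl, hab.le⟩, ?_⟩⟩
    rintro c d hs ⟨h1, h2⟩
    linarith [(hsub c d hs (by linarith)).1]
  obtain ⟨f, hf, _, hinj⟩ := Perfect.exists_nat_bool_injection ⟨hclosed, hacc⟩ hne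
  have h1 : (Set.range f).Countable := hEcount.mono hf
  have h2 : Countable (ℕ → Bool) := by
    have := h1.to_subtype
    exact (Set.rangeFactorization_injective.2 hinj).countable
  have h3 := Cardinal.mk_le_aleph0_iff.2 h2
  clear h2
  have h4 : Cardinal.mk (ℕ → Bool) = 2 ^ Cardinal.aleph0 := by simp
  rw [h4] at h3
  exact absurd h3 (not_le.2 (Cardinal.cantor _))
end

section
/- Let a < b be real numbers and let S be a partition of the closed interval [a,b] into closed segments (pairwise disjoint sets of the form [c,d], c ≤ d, whose union is [a,b]) such that S has more than one member. Then S contains uncountably many singleton members, i.e., the set { s ∈ S : s = {x} for some x } is uncountable. -/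
/-- If `S` is a partition of a closed interval `[a,b]` (with `a < b`) into closed
segments `[c,d]` (`c ≤ d`), and `S` has more than one member, then `S` contains
uncountably many singleton members. -/
theorem uncountably_many_singletons_of_partition_Icc (a b : ℝ) (hab : a < b)
    (S : Set (Set ℝ))
    (hdisj : S.Pairwise Disjoint)
    (hcover : ⋃₀ S = Set.Icc a b)
    (hseg : ∀ s ∈ S, ∃ c d : ℝ, c ≤ d ∧ s = Set.Icc c d)
    (hnontriv : S.Nontrivial) :
    ¬ ({s ∈ S | ∃ x : ℝ, s = {x}}).Countable := by
  intro hcount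
  have huniq : ∀ s ∈ S, ∀ t ∈ S, ∀ x, x ∈ s → x ∈ t → s = t := by
    intro s hs t ht x hxs hxt
    by_contra hne
    exact Set.disjoint_left.1 (hdisj hs ht hne) hxs hxt
  have hlt : ∀ c d c' d' : ℝ, c ≤ d → c' ≤ d' → Set.Icc c d ∈ S → Set.Icc c' d' ∈ S →
      c < c' → d < c' := by
    intro c d c' d' h1 h2 hs ht hcc
    by_contra hcon
    push Not at hcon
    have he := huniq _ hs _ ht c' ⟨hcc.le, hcon⟩ ⟨le_rfl, h2⟩
    have : c ∈ Set.Icc c' d' := he ▸ (⟨le_rfl, h1⟩ : c ∈ Set.Icc c d)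
    exact absurd this.1 (not_le.2 hcc)
  have hright : ∀ c d d' : ℝ, c ≤ d → c ≤ d' → Set.Icc c d ∈ S → Set.Icc c d' ∈ S →
      d' ≤ d := by
    intro c d d' h1 h2 hs ht
    have he := huniq _ hs _ ht c ⟨le_rfl, h1⟩ ⟨le_rfl, h2⟩
    have : d' ∈ Set.Icc c d := he ▸ (⟨h2, le_rfl⟩ : d' ∈ Set.Icc c d')
    exact this.2
  have hex : ∀ x ∈ Set.Icc a b, ∃ c d : ℝ, c ≤ x ∧ x ≤ d ∧ Set.Icc c d ∈ S := by
    intro x hx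
    rw [← hcover] at hx
    obtain ⟨s, hs, hxs⟩ := hx
    obtain ⟨c, d, -, rfl⟩ := hseg s hs
    exact ⟨c, d, hxs.1, hxs.2, hs⟩
  have hsub : ∀ s ∈ S, s ⊆ Set.Icc a b := fun s hs => hcover ▸ Set.subset_sUnion_of_mem hs
  let L : Set ℝ := {c | ∃ d, c ≤ d ∧ Set.Icc c d ∈ S}
  have hLsub : ∀ c ∈ L, c ∈ Set.Icc a b := by
    rintro c ⟨d, h, hs⟩
    exact hsub _ hs ⟨le_rfl, h⟩
  have hLcount : L.Countable := by
    have h1 : {c : ℝ | ({c} : Set ℝ) ∈ S}.Countable := by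
      have := hcount.preimage (f := fun c : ℝ => ({c} : Set ℝ)) Set.singleton_injective
      refine this.mono ?_
      intro c hc
      exact ⟨hc, c, rfl⟩
    have h2 : {c : ℝ | ∃ d, c < d ∧ Set.Icc c d ∈ S}.Countable := by
      have : ∀ c : ℝ, ∃ d, (∃ d, c < d ∧ Set.Icc c d ∈ S) → c < d ∧ Set.Icc c d ∈ S := by
        intro c
        by_cases h : ∃ d, c < d ∧ Set.Icc c d ∈ S
        · obtain ⟨d, hd⟩ := h
          exact ⟨d, fun _ => hd⟩
        · exact ⟨0, fun h' => absurd h' h⟩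
      choose y hy using this
      refine Set.PairwiseDisjoint.countable_of_Ioo (y := y) ?_ (fun c hc => (hy c hc).1)
      intro c hc c' hc' hne
      have p := hy c hc
      have p' := hy c' hc'
      refine Set.disjoint_left.2 fun z hz hz' => ?_
      rcases lt_or_gt_of_ne hne with h | h
      · have := hlt _ _ _ _ p.1.le p'.1.le p.2 p'.2 h
        linarith [hz.2, hz'.1]
      · have := hlt _ _ _ _ p'.1.le p.1.le p'.2 p.2 h
        linarith [hz'.2, hz.1]
    refine (h1.union h2).mono ?_
    rintro c ⟨d, hcd, hs⟩
    rcases hcd.eq_or_lt with rfl | h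
    · left; simpa using hs
    · right; exact ⟨d, h, hs⟩
  have hdense : DenselyOrdered L := by
    refine ⟨?_⟩
    rintro ⟨c, d, hcd, hs⟩ ⟨c', d', hcd', hs'⟩ hlt'
    have hcc : c < c' := hlt'
    have hdc := hlt _ _ _ _ hcd hcd' hs hs' hcc
    have ha := (hsub _ hs ⟨le_rfl, hcd⟩).1
    have hb := (hsub _ hs' ⟨le_rfl, hcd'⟩).2
    obtain ⟨e, f, he, hf, hef⟩ := hex ((d + c') / 2) ⟨by linarith, by linarith⟩
    refine ⟨⟨e, f, he.trans hf, hef⟩, ?_, ?_⟩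
    · change c < e
      rcases lt_trichotomy c e with h | h | h
      · exact h
      · subst h
        have := hright _ _ _ hcd (he.trans hf) hs hef
        linarith
      · have := hlt _ _ _ _ (he.trans hf) hcd hef hs h
        linarith
    · change e < c'
      linarith
  have hnt : Nontrivial L := by
    obtain ⟨s, hs, t, ht, hne⟩ := hnontriv
    obtain ⟨c, d, hcd, rfl⟩ := hseg s hs
    obtain ⟨c', d', hcd', rfl⟩ := hseg t ht
    refine ⟨⟨c, d, hcd, hs⟩, ⟨c', d', hcd', ht⟩, ?_⟩
    intro h
    have h : c = c' := congrArg Subtype.val h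
    subst h
    exact hne (huniq _ hs _ ht c ⟨le_rfl, hcd⟩ ⟨le_rfl, hcd'⟩)
  obtain ⟨f⟩ := Order.embedding_from_countable_to_dense (α := ℚ) (β := L)
  -- cuts
  have hcut : ∀ r : ℝ, ∃ l : L, (∀ q : ℚ, (q : ℝ) < r → f q ≤ l) ∧
      (∀ q : ℚ, r < (q : ℝ) → l ≤ f q) := by
    intro r
    let A : Set ℝ := (fun q : ℚ => (f q : ℝ)) '' {q | (q : ℝ) < r}
    have hne : A.Nonempty := by
      obtain ⟨q, hq⟩ := exists_rat_lt r
      exact ⟨_, q, hq, rfl⟩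
    have hbd : BddAbove A := by
      refine ⟨b, ?_⟩
      rintro _ ⟨q, -, rfl⟩
      exact (hLsub _ (f q).2).2
    have hx : sSup A ∈ Set.Icc a b := by
      constructor
      · obtain ⟨_, q, hq, rfl⟩ := id hne
        exact (hLsub _ (f q).2).1.trans (le_csSup hbd ⟨q, hq, rfl⟩)
      · refine csSup_le hne ?_
        rintro _ ⟨q, -, rfl⟩
        exact (hLsub _ (f q).2).2
    obtain ⟨c, d, hc, hd, hs⟩ := hex _ hx
    refine ⟨⟨c, d, hc.trans hd, hs⟩, ?_, ?_⟩
    · intro q hq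
      have h1 : (f q : ℝ) ≤ sSup A := le_csSup hbd ⟨q, hq, rfl⟩
      obtain ⟨d', hd', hs'⟩ := (f q).2
      change (f q : ℝ) ≤ c
      by_contra hcon
      push Not at hcon
      have := hlt _ _ _ _ (hc.trans hd) hd' hs hs' hcon
      linarith
    · intro q hq
      change c ≤ (f q : ℝ)
      refine hc.trans (csSup_le hne ?_)
      rintro _ ⟨q', hq', rfl⟩
      have : q' ≤ q := by
        have : (q' : ℝ) < q := lt_trans hq' hq
        exact_mod_cast this.le
      exact f.monotone this
  choose g hg1 hg2 using hcut
  have hmono : StrictMono g := by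
    intro r r' h
    obtain ⟨q, h1, h2⟩ := exists_rat_btwn h
    obtain ⟨q', h3, h4⟩ := exists_rat_btwn h2
    have hqq : q < q' := by exact_mod_cast h3
    exact ((hg2 r q h1).trans_lt (f.strictMono hqq)).trans_le (hg1 r' q' h4)
  have : Countable L := hLcount.to_subtype
  have : Countable ℝ := hmono.injective.countable
  exact not_countable this
end

section
/- Let D = [0,1] × [0,1] ⊆ ℝ² and let S ⊆ D be downward closed within D: if x ∈ S, y ∈ D and y ≤ x in the product order, then y ∈ S. Let l = {(x, m·x + c) : x ∈ ℝ} be a slower-than-light line, i.e., m > 0. If l meets S and l also meets D ∖ S, then the intersection of l with the boundary of S in D (the frontier of S in the subspace topology on D) consists of exactly one point. -/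
/-- The closed unit square `D = [0,1] × [0,1] ⊆ ℝ²`. -/
def unitSquare : Set (ℝ × ℝ) := Set.Icc 0 1 ×ˢ Set.Icc 0 1

lemma preconn_inter_frontier {X : Type*} [TopologicalSpace X] {t s : Set X}
    (ht : IsPreconnected t) (h1 : (t ∩ s).Nonempty) (h2 : (t ∩ sᶜ).Nonempty) :
    (t ∩ frontier s).Nonempty := by
  by_contra hne
  have key : ∀ x ∈ t, x ∈ closure s → x ∈ interior s := fun x hx hc => by
    by_contra hi
    exact hne ⟨x, hx, hc, hi⟩
  obtain ⟨a, hat, has⟩ := h1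
  obtain ⟨b, hbt, hbs⟩ := h2
  obtain ⟨z, -, hz1, hz2⟩ := ht (interior s) (closure s)ᶜ isOpen_interior
    isClosed_closure.isOpen_compl
    (fun x hx => by
      by_cases hc : x ∈ closure s
      · exact Or.inl (key x hx hc)
      · exact Or.inr hc)
    ⟨a, hat, key a hat (subset_closure has)⟩
    ⟨b, hbt, fun hc => hbs (interior_subset (key b hbt hc))⟩
  exact hz2 (subset_closure (interior_subset hz1))

lemma mem_interior_of_lt (S : Set (ℝ × ℝ))
    (hdc : ∀ x ∈ S, ∀ y ∈ unitSquare, y ≤ x → y ∈ S) (p q : unitSquare)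
    (h1 : (p : ℝ × ℝ).1 < (q : ℝ × ℝ).1) (h2 : (p : ℝ × ℝ).2 < (q : ℝ × ℝ).2)
    (hq : q ∈ closure {y : unitSquare | (y : ℝ × ℝ) ∈ S}) :
    p ∈ interior {y : unitSquare | (y : ℝ × ℝ) ∈ S} := by
  obtain ⟨a, ha1, ha2⟩ := exists_between h1
  obtain ⟨b, hb1, hb2⟩ := exists_between h2
  have hU : IsOpen {y : unitSquare | a < (y : ℝ × ℝ).1 ∧ b < (y : ℝ × ℝ).2} := by
    rw [Set.ofPred_and]
    exact IsOpen.inter (isOpen_lt (by fun_prop) (by fun_prop))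
      (isOpen_lt (by fun_prop) (by fun_prop))
  have hV : IsOpen {y : unitSquare | (y : ℝ × ℝ).1 < a ∧ (y : ℝ × ℝ).2 < b} := by
    rw [Set.ofPred_and]
    exact IsOpen.inter (isOpen_lt (by fun_prop) (by fun_prop))
      (isOpen_lt (by fun_prop) (by fun_prop))
  obtain ⟨z, ⟨hz1, hz2⟩, hzS⟩ := mem_closure_iff.1 hq _ hU ⟨ha2, hb2⟩
  refine mem_interior.2 ⟨_, ?_, hV, ⟨ha1, hb1⟩⟩
  rintro y ⟨hy1, hy2⟩
  exact hdc z hzS y y.2 ⟨(hy1.trans hz1).le, (hy2.trans hz2).le⟩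

/-- Let `S` be a downward closed subset of the closed unit square `D` (with respect
to the componentwise order), and let `l` be a slower-than-light line `y = m·x + c`
with `m > 0`.  If `l` meets `S` and also meets `D ∖ S`, then `l` meets the boundary
(frontier) of `S` in the subspace topology on `D` in exactly one point. -/
theorem slower_than_light_line_meets_boundary_once (S : Set (ℝ × ℝ))
    (hSD : S ⊆ unitSquare)
    (hdc : ∀ x ∈ S, ∀ y ∈ unitSquare, y ≤ x → y ∈ S)
    (m c : ℝ) (hm : 0 < m)
    (h1 : ({p : ℝ × ℝ | p.2 = m * p.1 + c} ∩ S).Nonempty)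
    (h2 : ({p : ℝ × ℝ | p.2 = m * p.1 + c} ∩ (unitSquare \ S)).Nonempty) :
    ∃! x : unitSquare, (x : ℝ × ℝ) ∈ {p : ℝ × ℝ | p.2 = m * p.1 + c} ∧
      x ∈ frontier {y : unitSquare | (y : ℝ × ℝ) ∈ S} := by
  have hex : ({x : unitSquare | (x : ℝ × ℝ).2 = m * (x : ℝ × ℝ).1 + c} ∩
      frontier {y : unitSquare | (y : ℝ × ℝ) ∈ S}).Nonempty := by
    apply preconn_inter_frontier
    · rw [← Topology.IsInducing.subtypeVal.isPreconnected_image]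
      apply Convex.isPreconnected
      rintro _ ⟨x, hx, rfl⟩ _ ⟨y, hy, rfl⟩ s t hs ht hst
      have hD : Convex ℝ unitSquare := (convex_Icc 0 1).prod (convex_Icc 0 1)
      refine ⟨⟨_, hD x.2 y.2 hs ht hst⟩, ?_, rfl⟩
      simp only [Set.mem_ofPred_eq, Prod.snd_add, Prod.fst_add, Prod.smul_fst, Prod.smul_snd,
        smul_eq_mul] at hx hy ⊢
      rw [hx, hy]
      linear_combination c * hst
    · obtain ⟨x, hl, hS⟩ := h1
      exact ⟨⟨x, hSD hS⟩, hl, hS⟩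
    · obtain ⟨x, hl, hD, hS⟩ := h2
      exact ⟨⟨x, hD⟩, hl, hS⟩
  obtain ⟨x, hx, hxf⟩ := hex
  refine ⟨x, ⟨hx, hxf⟩, ?_⟩
  rintro y ⟨hy, hyf⟩
  simp only [Set.mem_ofPred_eq] at hx hy
  rcases lt_trichotomy (y : ℝ × ℝ).1 (x : ℝ × ℝ).1 with h | h | h
  · refine absurd (mem_interior_of_lt S hdc y x h ?_ hxf.1) hyf.2
    rw [hx, hy]
    linarith [mul_lt_mul_of_pos_left h hm]
  · exact Subtype.ext (Prod.ext h (by rw [hx, hy, h]))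
  · refine absurd (mem_interior_of_lt S hdc x y h ?_ hyf.1) hxf.2
    rw [hx, hy]
    linarith [mul_lt_mul_of_pos_left h hm]
end

section
/- Let D = [0,1] × [0,1] ⊆ ℝ² and let S ⊆ D be downward closed within D (if x ∈ S, y ∈ D and y ≤ x in the product order, then y ∈ S), with both S and D ∖ S nonempty. Then the boundary Γ of S in D (the frontier of S in the subspace topology on D), equipped with the subspace topology, is homeomorphic to a closed real interval: there exist a ≤ b in ℝ and a homeomorphism from Γ onto [a,b] (the case a = b meaning Γ is a single point). -/
lemma inter_frontier_nonempty_aux {X : Type*} [TopologicalSpace X] {A T : Set X}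
    (hA : IsPreconnected A) (h1 : (A ∩ T).Nonempty) (h2 : (A ∩ Tᶜ).Nonempty) :
    (A ∩ frontier T).Nonempty := by
  by_contra hne
  have hnf : ∀ x ∈ A, x ∉ frontier T := fun x hx hf => hne ⟨x, hx, hf⟩
  have hi : ∀ x ∈ A, x ∈ T → x ∈ interior T := by
    intro x hx hxT
    by_contra hxi
    exact hnf x hx ⟨subset_closure hxT, hxi⟩
  have hj : ∀ x ∈ A, x ∈ Tᶜ → x ∈ interior Tᶜ := by
    intro x hx hxT
    by_contra hxi
    apply hnf x hx
    rw [← frontier_compl]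
    exact ⟨subset_closure hxT, hxi⟩
  obtain ⟨a, ha, haT⟩ := h1
  obtain ⟨b, hb, hbT⟩ := h2
  obtain ⟨x, -, hx1, hx2⟩ := hA _ _ isOpen_interior isOpen_interior
    (fun x hx => (Classical.em (x ∈ T)).imp (hi x hx) (hj x hx))
    ⟨a, ha, hi a ha haT⟩ ⟨b, hb, hj b hb hbT⟩
  exact interior_subset hx2 (interior_subset hx1)

lemma diag_preconn (c : ℝ) :
    IsPreconnected {y : unitSquare | (y : ℝ × ℝ).1 - (y : ℝ × ℝ).2 = c} := by
  rw [← Topology.IsInducing.subtypeVal.isPreconnected_image]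
  apply Convex.isPreconnected
  have h : (Subtype.val '' {y : unitSquare | (y : ℝ × ℝ).1 - (y : ℝ × ℝ).2 = c})
      = unitSquare ∩ {p : ℝ × ℝ | p.1 - p.2 = c} := by
    ext p
    constructor
    · rintro ⟨y, hy, rfl⟩
      exact ⟨y.2, hy⟩
    · rintro ⟨h1, h2⟩
      exact ⟨⟨p, h1⟩, h2, rfl⟩
  rw [h]
  apply Convex.inter
  · exact (convex_Icc _ _).prod (convex_Icc _ _)
  · intro p hp q hq a b _ _ hab
    simp only [Set.mem_ofPred_eq, Prod.fst_add, Prod.snd_add, Prod.smul_fst, Prod.smul_snd,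
      smul_eq_mul] at *
    have : a * p.1 + b * q.1 - (a * p.2 + b * q.2) = a * (p.1 - p.2) + b * (q.1 - q.2) := by ring
    rw [this, hp, hq, ← add_mul, hab, one_mul]

lemma mem_sq (x y : ℝ) : (x, y) ∈ unitSquare ↔ (0 ≤ x ∧ x ≤ 1) ∧ 0 ≤ y ∧ y ≤ 1 := by
  simp only [unitSquare, Set.mem_prod, Set.mem_Icc]

lemma not_frontier_of_open {T U : Set unitSquare} (hU : IsOpen U) (p : unitSquare) (hp : p ∈ U)
    (h : U ⊆ T ∨ U ⊆ Tᶜ) : p ∉ frontier T := by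
  rcases h with h | h
  · exact fun hf => hf.2 (interior_maximal h hU hp)
  · rw [← frontier_compl]
    exact fun hf => hf.2 (interior_maximal h hU hp)

lemma frontier_inj {T : Set unitSquare} (hT : ∀ x ∈ T, ∀ y : unitSquare, y.1 ≤ x.1 → y ∈ T)
    (p q : unitSquare) (hp : p ∈ frontier T) (hq : q ∈ frontier T)
    (h1 : q.1.1 < p.1.1) (h2 : q.1.2 < p.1.2) : False := by
  have hU : IsOpen {s : unitSquare | q.1.1 < s.1.1 ∧ q.1.2 < s.1.2} :=
    IsOpen.and (isOpen_lt (by fun_prop) (by fun_prop)) (isOpen_lt (by fun_prop) (by fun_prop))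
  obtain ⟨s, ⟨hs1, hs2⟩, hsT⟩ := mem_closure_iff.1 hp.1 _ hU ⟨h1, h2⟩
  have hV : IsOpen {r : unitSquare | r.1.1 < s.1.1 ∧ r.1.2 < s.1.2} :=
    IsOpen.and (isOpen_lt (by fun_prop) (by fun_prop)) (isOpen_lt (by fun_prop) (by fun_prop))
  exact not_frontier_of_open hV q ⟨hs1, hs2⟩
    (Or.inl fun r hr => hT s hsT r ⟨hr.1.le, hr.2.le⟩) hq

lemma diag_meets {T : Set unitSquare} (hT : ∀ x ∈ T, ∀ y : unitSquare, y.1 ≤ x.1 → y ∈ T)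
    (p q : unitSquare) (hp : p ∈ frontier T) (hq : q ∈ frontier T) (c : ℝ)
    (h1 : p.1.1 - p.1.2 < c) (h2 : c < q.1.1 - q.1.2) :
    ∃ r ∈ frontier T, r.1.1 - r.1.2 = c := by
  obtain ⟨⟨⟨p1, p2⟩, hps⟩, hp'⟩ : {x // x = p} := ⟨p, rfl⟩
  obtain ⟨⟨⟨q1, q2⟩, hqs⟩, hq'⟩ : {x // x = q} := ⟨q, rfl⟩
  subst hp' hq'
  dsimp only at h1 h2
  have hps' := (mem_sq _ _).1 hps
  have hqs' := (mem_sq _ _).1 hqs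
  obtain ⟨⟨a1, a2⟩, a3, a4⟩ := hps'
  obtain ⟨⟨b1, b2⟩, b3, b4⟩ := hqs'
  by_contra hne
  have key : ¬ (({y : unitSquare | (y : ℝ × ℝ).1 - (y : ℝ × ℝ).2 = c} ∩ T).Nonempty ∧
      ({y : unitSquare | (y : ℝ × ℝ).1 - (y : ℝ × ℝ).2 = c} ∩ Tᶜ).Nonempty) := by
    rintro ⟨hA, hB⟩
    obtain ⟨r, hr, hr'⟩ := inter_frontier_nonempty_aux (diag_preconn c) hA hB
    exact hne ⟨r, hr', hr⟩
  have key2 : ∀ u v : unitSquare, u.1.1 - u.1.2 = c → v.1.1 - v.1.2 = c → u ∈ T → v ∈ T := by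
    intro u v hu hv huT
    by_contra hvT
    exact key ⟨⟨u, hu, huT⟩, ⟨v, hv, hvT⟩⟩
  rcases le_total 0 c with hc | hc
  · let u : unitSquare := ⟨(1, 1 - c), (mem_sq _ _).2 (by constructor <;> constructor <;> linarith)⟩
    let v : unitSquare := ⟨(c, 0), (mem_sq _ _).2 (by constructor <;> constructor <;> linarith)⟩
    by_cases hu : u ∈ T
    · have hV : IsOpen {r : unitSquare | r.1.2 < 1 - c} := isOpen_lt (by fun_prop) (by fun_prop)
      refine not_frontier_of_open hV _ ?_ (Or.inl fun r hr => hT u hu r ⟨r.2.1.2, ?_⟩) hq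
      · show q2 < 1 - c
        linarith
      · exact le_of_lt hr
    · have hv : v ∉ T := fun hv => hu (key2 v u (by simp [v]) (by simp [u]) hv)
      have hV : IsOpen {r : unitSquare | c < r.1.1} := isOpen_lt (by fun_prop) (by fun_prop)
      refine not_frontier_of_open hV _ ?_ (Or.inr fun r hr hrT => hv (hT r hrT v ⟨?_, r.2.2.1⟩)) hq
      · show c < q1
        linarith
      · exact le_of_lt hr
  · let u : unitSquare := ⟨(1 + c, 1), (mem_sq _ _).2 (by constructor <;> constructor <;> linarith)⟩
    let v : unitSquare := ⟨(0, -c), (mem_sq _ _).2 (by constructor <;> constructor <;> linarith)⟩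
    by_cases hu : u ∈ T
    · have hV : IsOpen {r : unitSquare | r.1.1 < 1 + c} := isOpen_lt (by fun_prop) (by fun_prop)
      refine not_frontier_of_open hV _ ?_ (Or.inl fun r hr => hT u hu r ⟨?_, r.2.2.2⟩) hp
      · show p1 < 1 + c
        linarith
      · exact le_of_lt hr
    · have hv : v ∉ T := fun hv => hu (key2 v u (by simp [v]) (by simp [u]) hv)
      have hV : IsOpen {r : unitSquare | -c < r.1.2} := isOpen_lt (by fun_prop) (by fun_prop)
      refine not_frontier_of_open hV _ ?_ (Or.inr fun r hr hrT => hv (hT r hrT v ⟨r.2.1.1, ?_⟩)) hp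
      · show -c < p2
        linarith
      · exact le_of_lt hr

/-- Let `S` be a downward closed subset of the closed unit square `D` (with respect
to the componentwise order), with `S` and `D ∖ S` nonempty.  Then the boundary
(frontier) `Γ` of `S` in the subspace topology on `D` is homeomorphic to a closed
real interval `[a,b]` with `a ≤ b` (the case `a = b` meaning a single point). -/
theorem boundary_homeomorphic_to_closed_segment (S : Set (ℝ × ℝ))
    (hSD : S ⊆ unitSquare)
    (hdc : ∀ x ∈ S, ∀ y ∈ unitSquare, y ≤ x → y ∈ S)
    (hS : S.Nonempty) (hDS : (unitSquare \ S).Nonempty) :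
    ∃ a b : ℝ, a ≤ b ∧
      Nonempty ((frontier {y : unitSquare | (y : ℝ × ℝ) ∈ S}) ≃ₜ (Set.Icc a b)) := by
  obtain ⟨T, hTdef⟩ : {T : Set unitSquare // T = {y : unitSquare | (y : ℝ × ℝ) ∈ S}} := ⟨_, rfl⟩
  rw [← hTdef]
  have hT : ∀ x ∈ T, ∀ y : unitSquare, y.1 ≤ x.1 → y ∈ T := by
    subst hTdef
    exact fun x hx y hy => hdc x.1 hx y.1 y.2 hy
  have hcomp : IsCompact unitSquare := isCompact_Icc.prod isCompact_Icc
  have : CompactSpace unitSquare := isCompact_iff_compactSpace.1 hcomp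
  have hconv : Convex ℝ unitSquare := (convex_Icc _ _).prod (convex_Icc _ _)
  have : PreconnectedSpace unitSquare := Subtype.preconnectedSpace hconv.isPreconnected
  have hne : (frontier T).Nonempty := by
    obtain ⟨s, hs⟩ := hS
    obtain ⟨d, hd, hdS⟩ := hDS
    have h := inter_frontier_nonempty_aux (isPreconnected_univ (α := unitSquare)) (T := T)
      ⟨⟨s, hSD hs⟩, trivial, by subst hTdef; exact hs⟩
      ⟨⟨d, hd⟩, trivial, by subst hTdef; exact hdS⟩
    simpa using h
  have hgc : Continuous (fun y : unitSquare => y.1.1 - y.1.2) := by fun_prop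
  have hcpt : IsCompact (frontier T) := isClosed_frontier.isCompact
  have himc := hcpt.image hgc
  have hconn : IsConnected ((fun y : unitSquare => y.1.1 - y.1.2) '' frontier T) := by
    refine ⟨hne.image _, Set.OrdConnected.isPreconnected ⟨?_⟩⟩
    rintro _ ⟨p, hp, rfl⟩ _ ⟨q, hq, rfl⟩ c ⟨h1, h2⟩
    rcases h1.eq_or_lt with h1 | h1
    · exact ⟨p, hp, h1⟩
    rcases h2.eq_or_lt with h2 | h2
    · exact ⟨q, hq, h2.symm⟩
    exact diag_meets hT p q hp hq c h1 h2
  have hIcc := eq_Icc_of_connected_compact hconn himc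
  obtain ⟨c, hc⟩ := hconn.nonempty
  have hab := hc
  rw [hIcc] at hab
  refine ⟨_, _, hab.1.trans hab.2, ?_⟩
  rw [← hIcc]
  have hinj : Set.InjOn (fun y : unitSquare => y.1.1 - y.1.2) (frontier T) := by
    intro p hp q hq hpq
    dsimp only at hpq
    rcases lt_trichotomy p.1.1 q.1.1 with h | h | h
    · exact (frontier_inj hT q p hq hp h (by linarith)).elim
    · exact Subtype.ext (Prod.ext h (by linarith))
    · exact (frontier_inj hT p q hp hq h (by linarith)).elim
  have : CompactSpace (frontier T) := isCompact_iff_compactSpace.1 hcpt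
  refine ⟨Continuous.homeoOfEquivCompactToT2 (f := Equiv.Set.imageOfInjOn _ _ hinj) ?_⟩
  exact Continuous.subtype_mk (hgc.comp continuous_subtype_val) _
end

section
/- Let D = {(x,y) ∈ ℝ² : y > x} be the open half-plane above the diagonal. A purely modal formula φ (a temporal formula containing no occurrence of the past operator P) is satisfiable over (ℝ², ≤) if and only if it is satisfiable over (D, ≤), where ≤ is the componentwise order on ℝ² (restricted to D in the second frame). -/
namespace Temporal

/-- Temporal propositional formulas: `φ ::= q | ¬φ | φ∨φ' | Fφ | Pφ`. -/
inductive TForm : Type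
  | prop : ℕ → TForm
  | neg : TForm → TForm
  | or : TForm → TForm → TForm
  | fut : TForm → TForm
  | past : TForm → TForm
  deriving DecidableEq

/-- Truth of a temporal formula at a point of a Kripke structure. -/
def TSat {X : Type*} (R : X → X → Prop) (v : ℕ → Set X) : TForm → X → Prop
  | .prop n, x => x ∈ v n
  | .neg φ, x => ¬ TSat R v φ x
  | .or φ ψ, x => TSat R v φ x ∨ TSat R v ψ x
  | .fut φ, x => ∃ y, R x y ∧ TSat R v φ y
  | .past φ, x => ∃ y, R y x ∧ TSat R v φ y

/-- Validity of a temporal formula over a Kripke frame. -/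
def TValid {X : Type*} (R : X → X → Prop) (φ : TForm) : Prop :=
  ∀ (v : ℕ → Set X) (x : X), TSat R v φ x

/-- Satisfiability of a temporal formula over a Kripke frame. -/
def TSatisfiable {X : Type*} (R : X → X → Prop) (φ : TForm) : Prop :=
  ∃ (v : ℕ → Set X) (x : X), TSat R v φ x

/-- An explicit encoding of temporal formulas as natural numbers. -/
def encodeT : TForm → ℕ
  | .prop n => 5 * n
  | .neg φ => 5 * encodeT φ + 1
  | .or φ ψ => 5 * Nat.pair (encodeT φ) (encodeT ψ) + 2
  | .fut φ => 5 * encodeT φ + 3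
  | .past φ => 5 * encodeT φ + 4

/-- The inverse decoding of natural numbers as temporal formulas. -/
def decodeT (n : ℕ) : TForm :=
  if h0 : n % 5 = 0 then .prop (n / 5)
  else
    have hn : 0 < n := Nat.pos_of_ne_zero (by rintro rfl; simp at h0)
    have hlt : n / 5 < n := Nat.div_lt_self hn (by norm_num)
    have h1 : (n / 5).unpair.1 < n := lt_of_le_of_lt (Nat.unpair_left_le _) hlt
    have h2 : (n / 5).unpair.2 < n := lt_of_le_of_lt (Nat.unpair_right_le _) hlt
    if n % 5 = 1 then .neg (decodeT (n / 5))
    else if n % 5 = 2 then .or (decodeT (n / 5).unpair.1) (decodeT (n / 5).unpair.2)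
    else if n % 5 = 3 then .fut (decodeT (n / 5))
    else .past (decodeT (n / 5))

theorem decodeT_encodeT (φ : TForm) : decodeT (encodeT φ) = φ := by
  induction φ with
  | prop n => rw [encodeT, decodeT]; simp [Nat.mul_div_cancel_left, Nat.mul_mod_right]
  | neg φ ih => rw [encodeT, decodeT]; simp [Nat.mul_add_mod, Nat.mul_add_div, ih]
  | or φ ψ ih1 ih2 => rw [encodeT, decodeT]; simp [Nat.mul_add_mod, Nat.mul_add_div, ih1, ih2]
  | fut φ ih => rw [encodeT, decodeT]; simp [Nat.mul_add_mod, Nat.mul_add_div, ih]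
  | past φ ih => rw [encodeT, decodeT]; simp [Nat.mul_add_mod, Nat.mul_add_div, ih]

theorem encodeT_decodeT (n : ℕ) : encodeT (decodeT n) = n := by
  induction n using Nat.strong_induction_on with
  | _ n ih =>
    rw [decodeT]
    by_cases h0 : n % 5 = 0
    · simp only [h0, dif_pos]
      rw [encodeT]
      omega
    · have hn : 0 < n := Nat.pos_of_ne_zero (by rintro rfl; simp at h0)
      have hlt : n / 5 < n := Nat.div_lt_self hn (by norm_num)
      have h1 : (n / 5).unpair.1 < n := lt_of_le_of_lt (Nat.unpair_left_le _) hlt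
      have h2 : (n / 5).unpair.2 < n := lt_of_le_of_lt (Nat.unpair_right_le _) hlt
      rw [dif_neg h0]
      by_cases e1 : n % 5 = 1
      · rw [if_pos e1, encodeT, ih _ hlt]
        omega
      · rw [if_neg e1]
        by_cases e2 : n % 5 = 2
        · rw [if_pos e2, encodeT, ih _ h1, ih _ h2, Nat.pair_unpair]
          omega
        · rw [if_neg e2]
          by_cases e3 : n % 5 = 3
          · rw [if_pos e3, encodeT, ih _ hlt]
            omega
          · rw [if_neg e3, encodeT, ih _ hlt]
            omega

instance : Encodable TForm :=
  ⟨encodeT, fun n => some (decodeT n), fun φ => congrArg some (decodeT_encodeT φ)⟩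

instance : Denumerable TForm :=
  ⟨fun n => ⟨decodeT n, rfl, encodeT_decodeT n⟩⟩


/-- A purely modal formula: a temporal formula with no occurrence of the past
operator `P`. -/
def noPast : TForm → Prop
  | .prop _ => True
  | .neg φ => noPast φ
  | .or φ ψ => noPast φ ∧ noPast ψ
  | .fut φ => noPast φ
  | .past _ => False

section Aux

open Classical in
/-- A chosen `R`-successor of `w` satisfying `ψ`, or `w` itself if there is none. -/
noncomputable def wit {W : Type} (R : W → W → Prop) (v : ℕ → Set W) (w : W) (ψ : TForm) : W :=
  if h : ∃ u, R w u ∧ TSat R v ψ u then h.choose else w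

theorem wit_rel {W : Type} {R : W → W → Prop} (hr : ∀ w, R w w) (v : ℕ → Set W) (w : W)
    (ψ : TForm) : R w (wit R v w ψ) := by
  unfold wit
  split_ifs with h
  · exact h.choose_spec.1
  · exact hr w

theorem wit_sat {W : Type} {R : W → W → Prop} {v : ℕ → Set W} {w : W}
    {ψ : TForm} (h : TSat R v (.fut ψ) w) : TSat R v ψ (wit R v w ψ) := by
  have h' : ∃ u, R w u ∧ TSat R v ψ u := h
  unfold wit
  rw [dif_pos h']
  exact h'.choose_spec.2

/-- Formula coded by a natural number; every formula has arbitrarily large codes. -/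
def dec (n : ℕ) : TForm := decodeT n.unpair.1

theorem dec_large (ψ : TForm) (N : ℕ) : ∃ n, N ≤ n ∧ dec n = ψ := by
  refine ⟨Nat.pair (encodeT ψ) N, Nat.right_le_pair _ _, ?_⟩
  simp [dec, decodeT_encodeT]

/-- Stability of the possible subformulas above `w`. -/
def Stab {W : Type} (R : W → W → Prop) (v : ℕ → Set W) (w : W) : TForm → Prop
  | .prop _ => True
  | .neg φ => Stab R v w φ
  | .or φ ψ => Stab R v w φ ∧ Stab R v w ψ
  | .fut φ => Stab R v w φ ∧
      ∀ u, R w u → TSat R v (.fut φ) w → TSat R v (.fut φ) u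
  | .past _ => True

theorem fut_down {W : Type} {R : W → W → Prop} (ht : ∀ a b c, R a b → R b c → R a c)
    {v : ℕ → Set W} {w u : W} {ψ : TForm} (h : R w u) (hu : TSat R v (.fut ψ) u) :
    TSat R v (.fut ψ) w := by
  obtain ⟨y, hy, h2⟩ := hu
  exact ⟨y, ht _ _ _ h hy, h2⟩

theorem Stab.up {W : Type} {R : W → W → Prop} (ht : ∀ a b c, R a b → R b c → R a c)
    {v : ℕ → Set W} {w u : W} (h : R w u) : ∀ {φ : TForm}, Stab R v w φ → Stab R v u φ
  | .prop _, _ => trivial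
  | .neg φ, hs => Stab.up (φ := φ) ht h hs
  | .or φ ψ, hs => ⟨Stab.up (φ := φ) ht h hs.1, Stab.up (φ := ψ) ht h hs.2⟩
  | .fut φ, hs => ⟨Stab.up (φ := φ) ht h hs.1,
      fun u' hu' hf => hs.2 u' (ht _ _ _ h hu') (fut_down ht h hf)⟩
  | .past _, _ => trivial

theorem exists_stab {W : Type} {R : W → W → Prop} (hr : ∀ w, R w w)
    (ht : ∀ a b c, R a b → R b c → R a c) (v : ℕ → Set W) (φ : TForm) :
    ∀ w, ∃ w', R w w' ∧ Stab R v w' φ := by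
  induction φ with
  | prop n => exact fun w => ⟨w, hr w, trivial⟩
  | neg φ ih => exact ih
  | or φ ψ ih1 ih2 =>
    intro w
    obtain ⟨a, ha, sa⟩ := ih1 w
    obtain ⟨b, hb, sb⟩ := ih2 a
    exact ⟨b, ht _ _ _ ha hb, Stab.up ht hb sa, sb⟩
  | fut φ ih =>
    intro w
    obtain ⟨a, ha, sa⟩ := ih w
    by_cases h : ∀ u, R a u → TSat R v (.fut φ) u
    · exact ⟨a, ha, sa, fun u hu _ => h u hu⟩
    · push Not at h
      obtain ⟨b, hb, hn⟩ := h
      exact ⟨b, ht _ _ _ ha hb, Stab.up ht hb sa, fun u _ hf => absurd hf hn⟩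
  | past φ ih => exact fun w => ⟨w, hr w, trivial⟩

/-- Label at ternary level `n` of the point `x`: digit `1` moves to a witness. -/
noncomputable def lab {W : Type} (R : W → W → Prop) (v : ℕ → Set W) (w0 : W) : ℕ → ℝ → W
  | 0, _ => w0
  | n + 1, x => if ⌊(3:ℝ) ^ (n + 1) * x⌋ % 3 = 1 then wit R v (lab R v w0 n x) (dec n)
      else lab R v w0 n x

theorem floor_div3 (y : ℝ) : ⌊y⌋ = ⌊3 * y⌋ / 3 := by
  have h1 := Int.floor_le (3 * y)
  have h2 := Int.lt_floor_add_one (3 * y)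
  rw [Int.floor_eq_iff]
  have h3 : 3 * (⌊3 * y⌋ / 3) ≤ ⌊3 * y⌋ := by omega
  have h4 : ⌊3 * y⌋ + 1 ≤ 3 * (⌊3 * y⌋ / 3) + 3 := by omega
  have h3' : (3:ℝ) * ((⌊3 * y⌋ / 3 : ℤ) : ℝ) ≤ (⌊3 * y⌋ : ℝ) := by exact_mod_cast h3
  have h4' : (⌊3 * y⌋ : ℝ) + 1 ≤ (3:ℝ) * ((⌊3 * y⌋ / 3 : ℤ) : ℝ) + 3 := by exact_mod_cast h4
  constructor <;> linarith

theorem floor_pred {n : ℕ} {x y : ℝ} (h : ⌊(3:ℝ) ^ (n + 1) * x⌋ = ⌊(3:ℝ) ^ (n + 1) * y⌋) :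
    ⌊(3:ℝ) ^ n * x⌋ = ⌊(3:ℝ) ^ n * y⌋ := by
  rw [floor_div3 ((3:ℝ) ^ n * x), floor_div3 ((3:ℝ) ^ n * y)]
  rw [show 3 * ((3:ℝ) ^ n * x) = (3:ℝ) ^ (n + 1) * x by ring,
    show 3 * ((3:ℝ) ^ n * y) = (3:ℝ) ^ (n + 1) * y by ring, h]

theorem lab_congr {W : Type} (R : W → W → Prop) (v : ℕ → Set W) (w0 : W) (n : ℕ) (x y : ℝ)
    (h : ⌊(3:ℝ) ^ n * x⌋ = ⌊(3:ℝ) ^ n * y⌋) : lab R v w0 n x = lab R v w0 n y := by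
  induction n with
  | zero => rfl
  | succ n ih => simp only [lab]; rw [h, ih (floor_pred h)]

theorem lab_mono {W : Type} {R : W → W → Prop} (hr : ∀ w, R w w)
    (ht : ∀ a b c, R a b → R b c → R a c) (v : ℕ → Set W) (w0 : W) (x : ℝ) {m n : ℕ}
    (h : m ≤ n) : R (lab R v w0 m x) (lab R v w0 n x) := by
  induction n, h using Nat.le_induction with
  | base => exact hr _
  | succ n _ ih =>
    simp only [lab]
    split_ifs
    · exact ht _ _ _ ih (wit_rel hr _ _ _)
    · exact ih

theorem lab_keep {W : Type} (R : W → W → Prop) (v : ℕ → Set W) (w0 : W) (x : ℝ) {m n : ℕ}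
    (h : m ≤ n) (hk : ∀ j, m < j → j ≤ n → ⌊(3:ℝ) ^ j * x⌋ % 3 ≠ 1) :
    lab R v w0 n x = lab R v w0 m x := by
  induction n, h using Nat.le_induction with
  | base => rfl
  | succ n hmn ih =>
    simp only [lab]
    rw [if_neg (hk (n + 1) (by omega) le_rfl)]
    exact ih fun j h1 h2 => hk j h1 (by omega)

/-- The interval `[x,z)` lies in one ternary cylinder of level `n`. -/
def Fits (n : ℕ) (x z : ℝ) : Prop := (3:ℝ) ^ n * z ≤ ⌊(3:ℝ) ^ n * x⌋ + 1

theorem fits_floor {n : ℕ} {x z x' : ℝ} (h : Fits n x z) (h1 : x ≤ x') (h2 : x' < z) :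
    ⌊(3:ℝ) ^ n * x'⌋ = ⌊(3:ℝ) ^ n * x⌋ := by
  have hp : (0:ℝ) < 3 ^ n := by positivity
  unfold Fits at h
  rw [Int.floor_eq_iff]
  have := Int.floor_le ((3:ℝ) ^ n * x)
  constructor <;> nlinarith

theorem Fits.mono {n : ℕ} {x z x' z' : ℝ} (h : Fits n x z) (h1 : x ≤ x') (h2 : x' < z')
    (h3 : z' ≤ z) : Fits n x' z' := by
  have hp : (0:ℝ) < 3 ^ n := by positivity
  have := fits_floor h h1 (h2.trans_le h3)
  unfold Fits at h ⊢
  rw [this]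
  nlinarith

theorem Fits.pred {n : ℕ} {x z : ℝ} (h : Fits (n + 1) x z) : Fits n x z := by
  unfold Fits at h ⊢
  have e : ⌊(3:ℝ) ^ n * x⌋ = ⌊(3:ℝ) ^ (n + 1) * x⌋ / 3 := by
    rw [floor_div3, show 3 * ((3:ℝ) ^ n * x) = (3:ℝ) ^ (n + 1) * x by ring]
  have h4 : ⌊(3:ℝ) ^ (n + 1) * x⌋ + 1 ≤ 3 * ⌊(3:ℝ) ^ n * x⌋ + 3 := by omega
  have h4' : (⌊(3:ℝ) ^ (n + 1) * x⌋ : ℝ) + 1 ≤ 3 * (⌊(3:ℝ) ^ n * x⌋ : ℝ) + 3 := by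
    exact_mod_cast h4
  rw [pow_succ] at h h4'
  nlinarith

theorem Fits.le {m n : ℕ} {x z : ℝ} (h : Fits n x z) (hm : m ≤ n) : Fits m x z := by
  induction n, hm using Nat.le_induction with
  | base => exact h
  | succ n _ ih => exact ih h.pred

theorem Fits.len {n : ℕ} {x z : ℝ} (h : Fits n x z) : (3:ℝ) ^ n * (z - x) ≤ 1 := by
  unfold Fits at h
  have := Int.floor_le ((3:ℝ) ^ n * x)
  linarith

theorem exists_not_fits {x z : ℝ} (h : x < z) : ∃ n, ¬ Fits (n + 1) x z := by
  obtain ⟨n, hn⟩ := pow_unbounded_of_one_lt (1 / (z - x)) (by norm_num : (1:ℝ) < 3)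
  refine ⟨n, fun hf => ?_⟩
  have h1 := hf.pred.len
  rw [div_lt_iff₀ (by linarith)] at hn
  linarith

open Classical in
/-- Last level at which `[x,z)` fits in a cylinder. -/
noncomputable def lev (x z : ℝ) : ℕ :=
  if h : ∃ n, ¬ Fits (n + 1) x z then Nat.find h else 0

theorem lev_not {x z : ℝ} (h : x < z) : ¬ Fits (lev x z + 1) x z := by
  classical
  unfold lev
  rw [dif_pos (exists_not_fits h)]
  convert Nat.find_spec (exists_not_fits h)

theorem lev_fits {x z : ℝ} (h0 : Fits 0 x z) (h : x < z) : Fits (lev x z) x z := by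
  classical
  rcases hn : lev x z with _ | n
  · exact h0
  · have h1 : n < lev x z := by omega
    unfold lev at h1
    rw [dif_pos (exists_not_fits h)] at h1
    have := Nat.find_min (exists_not_fits h) h1
    push Not at this
    exact this

theorem le_lev {x z : ℝ} (h : x < z) {n : ℕ} (hn : Fits n x z) : n ≤ lev x z := by
  by_contra hc
  exact lev_not h (hn.le (by omega))

theorem lev_eq {x z : ℝ} (h : x < z) {n : ℕ} (hn : Fits n x z) (hn' : ¬ Fits (n + 1) x z) :
    lev x z = n := by
  refine le_antisymm ?_ (le_lev h hn)
  by_contra hc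
  have h2 := lev_fits (hn.le (Nat.zero_le _)) h
  exact hn' (h2.le (by omega))

/-- Label of the interval `[x,z)`. -/
noncomputable def ilab {W : Type} (R : W → W → Prop) (v : ℕ → Set W) (w0 : W) (x z : ℝ) : W :=
  lab R v w0 (lev x z) x

theorem ilab_mono {W : Type} {R : W → W → Prop} (hr : ∀ w, R w w)
    (ht : ∀ a b c, R a b → R b c → R a c) (v : ℕ → Set W) (w0 : W) {x z x' z' : ℝ}
    (h0 : Fits 0 x z) (h1 : x ≤ x') (h2 : x' < z') (h3 : z' ≤ z) :
    R (ilab R v w0 x z) (ilab R v w0 x' z') := by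
  have hf := lev_fits h0 (h1.trans_lt (h2.trans_le h3))
  unfold ilab
  rw [← lab_congr R v w0 _ _ _ (fits_floor hf h1 (h2.trans_le h3))]
  exact lab_mono hr ht v w0 x' (le_lev h2 (hf.mono h1 h2 h3))

/-- Core computation: interval of the level `m+1` cylinder with index `K ≡ 1 mod 3`. -/
theorem ilab_cyl {W : Type} (R : W → W → Prop) (v : ℕ → Set W) (w0 : W) (m : ℕ) (K : ℤ)
    (hK : K % 3 = 1) :
    ilab R v w0 (K / 3 ^ (m + 1)) ((K + 1) / 3 ^ (m + 1)) =
      wit R v (lab R v w0 m (K / 3 ^ (m + 1))) (dec m) := by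
  have hp : (0:ℝ) < 3 ^ (m + 1) := by positivity
  have e : (3:ℝ) ^ (m + 1) * (K / 3 ^ (m + 1)) = K := by field_simp
  have e2 : (3:ℝ) ^ (m + 1) * ((K + 1) / 3 ^ (m + 1)) = K + 1 := by field_simp
  have hlt : (K:ℝ) / 3 ^ (m + 1) < (K + 1) / 3 ^ (m + 1) := by
    gcongr; linarith
  have hl : lev ((K:ℝ) / 3 ^ (m + 1)) ((K + 1) / 3 ^ (m + 1)) = m + 1 := by
    refine lev_eq hlt ?_ ?_
    · unfold Fits
      rw [e, e2]; simp
    · intro hf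
      have := hf.len
      rw [pow_succ] at this
      nlinarith
  unfold ilab
  rw [hl]
  simp only [lab]
  rw [e]
  simp [hK]

theorem ilab_wit {W : Type} (R : W → W → Prop) (v : ℕ → Set W) (w0 : W) {x z : ℝ} (ψ : TForm)
    (h0 : Fits 0 x z) (h : x < z) :
    ∃ x' z', x ≤ x' ∧ x' < z' ∧ z' ≤ z ∧ ilab R v w0 x' z' = wit R v (ilab R v w0 x z) ψ := by
  have hf := lev_fits h0 h
  have hnf := lev_not h
  set n := lev x z with hn
  set k := ⌊(3:ℝ) ^ n * x⌋ with hk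
  set k1 := ⌊(3:ℝ) ^ (n + 1) * x⌋ with hk1
  have e : k = k1 / 3 := by
    rw [hk, hk1, floor_div3, show 3 * ((3:ℝ) ^ n * x) = (3:ℝ) ^ (n + 1) * x by ring]
  have hp : (0:ℝ) < 3 ^ (n + 1) := by positivity
  -- the separating ternary endpoint
  set ε : ℝ := (k1 + 1) / 3 ^ (n + 1) with hε
  have hxe : x < ε := by
    rw [hε, lt_div_iff₀ hp]
    have := Int.lt_floor_add_one ((3:ℝ) ^ (n + 1) * x)
    linarith
  have hez : ε < z := by
    rw [hε, div_lt_iff₀ hp]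
    unfold Fits at hnf
    push Not at hnf
    linarith
  have hk2 : k1 % 3 ≠ 2 := by
    intro h2
    have h5 : k1 + 1 = 3 * k + 3 := by omega
    have h5' : (k1 : ℝ) + 1 = 3 * k + 3 := by exact_mod_cast h5
    unfold Fits at hf
    rw [hε, h5', div_lt_iff₀ hp, pow_succ] at hez
    linarith
  -- large level
  obtain ⟨N, hN⟩ := pow_unbounded_of_one_lt (2 / min (ε - x) (z - ε)) (by norm_num : (1:ℝ) < 3)
  obtain ⟨m, hm, hdec⟩ := dec_large ψ (N + n + 1)
  have hmin : 0 < min (ε - x) (z - ε) := lt_min (by linarith) (by linarith)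
  have hpm : (0:ℝ) < 3 ^ (m + 1) := by positivity
  have hsmall : 2 / (3:ℝ) ^ (m + 1) < min (ε - x) (z - ε) := by
    rw [div_lt_iff₀ hmin] at hN
    rw [div_lt_iff₀ hpm]
    have : (3:ℝ) ^ N ≤ 3 ^ (m + 1) := pow_le_pow_right₀ (by norm_num) (by omega)
    nlinarith
  have hs1 : 2 / (3:ℝ) ^ (m + 1) < ε - x := hsmall.trans_le (min_le_left _ _)
  have hs2 : 2 / (3:ℝ) ^ (m + 1) < z - ε := hsmall.trans_le (min_le_right _ _)
  have hpos : 0 < 1 / (3:ℝ) ^ (m + 1) := by positivity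
  have h21 : 2 / (3:ℝ) ^ (m + 1) = 2 * (1 / (3:ℝ) ^ (m + 1)) := by ring
  obtain ⟨d, rfl⟩ : ∃ d, m = n + 1 + d := ⟨m - (n + 1), by omega⟩
  have heK : ε = (3 ^ (d + 1) * (k1 + 1)) / 3 ^ (n + 1 + d + 1) := by
    rw [hε, show n + 1 + d + 1 = (d + 1) + (n + 1) by ring, pow_add]
    field_simp
    ring
  -- key finishing step
  have key : ∀ c : ℤ, (c = -2 ∨ c = 1) →
      (∀ j, n < j → j ≤ n + 1 + d →
        ⌊(3:ℝ) ^ j * (ε + c * (1 / (3:ℝ) ^ (n + 1 + d + 1)))⌋ % 3 ≠ 1) →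
      ∃ x' z', x ≤ x' ∧ x' < z' ∧ z' ≤ z ∧ ilab R v w0 x' z' = wit R v (ilab R v w0 x z) ψ := by
    intro c hc hkeep
    have hK : (3 ^ (d + 1) * (k1 + 1) + c) % 3 = 1 := by
      rw [pow_succ, mul_comm _ (3:ℤ), mul_assoc]
      rcases hc with rfl | rfl <;> omega
    have hcyl := ilab_cyl R v w0 (n + 1 + d) _ hK
    have ex : ((3 ^ (d + 1) * (k1 + 1) + c : ℤ) : ℝ) / 3 ^ (n + 1 + d + 1) =
        ε + c * (1 / (3:ℝ) ^ (n + 1 + d + 1)) := by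
      rw [heK]; push_cast; ring
    have ez : (((3 ^ (d + 1) * (k1 + 1) + c : ℤ) : ℝ) + 1) / 3 ^ (n + 1 + d + 1) =
        ε + (c + 1) * (1 / (3:ℝ) ^ (n + 1 + d + 1)) := by
      rw [heK]; push_cast; ring
    rw [ex, ez, hdec] at hcyl
    have hx1 : x ≤ ε + c * (1 / (3:ℝ) ^ (n + 1 + d + 1)) := by
      rcases hc with rfl | rfl <;> push_cast <;> linarith
    have hx3 : ε + (c + 1) * (1 / (3:ℝ) ^ (n + 1 + d + 1)) ≤ z := by
      rcases hc with rfl | rfl <;> push_cast <;> linarith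
    have hx2 : ε + c * (1 / (3:ℝ) ^ (n + 1 + d + 1)) <
      ε + (c + 1) * (1 / (3:ℝ) ^ (n + 1 + d + 1)) := by linarith
    refine ⟨_, _, hx1, hx2, hx3, ?_⟩
    rw [hcyl, lab_keep R v w0 _ (by omega : n ≤ n + 1 + d) hkeep,
      lab_congr R v w0 n _ x (fits_floor hf hx1 (hx2.trans_le hx3))]
    rfl
  -- floors
  have hfl : ∀ i, i ≤ d → ∀ c : ℝ, (3:ℝ) ^ (n + 1 + i) * (ε + c * (1 / (3:ℝ) ^ (n + 1 + d + 1)))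
      = ((3 ^ i * (k1 + 1) : ℤ) : ℝ) + c * (1 / 3 ^ (d - i + 1)) := by
    intro i hi c
    obtain ⟨t, rfl⟩ := Nat.exists_eq_add_of_le hi
    rw [hε, show i + t - i = t by omega]
    push_cast
    rw [show n + 1 + (i + t) + 1 = (n + 1 + i) + (t + 1) by ring, pow_add _ (n + 1 + i) (t + 1),
      pow_add _ (n + 1) i]
    field_simp
  have hq : ∀ i : ℕ, 0 < 1 / (3:ℝ) ^ (i + 1) ∧ 1 / (3:ℝ) ^ (i + 1) ≤ 1 / 3 := by
    intro i
    refine ⟨by positivity, ?_⟩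
    have : (1:ℝ) ≤ 3 ^ i := one_le_pow₀ (by norm_num)
    apply one_div_le_one_div_of_le (by norm_num)
    rw [pow_succ]; linarith
  by_cases h3 : k1 % 3 = 0
  · refine key (-2) (Or.inl rfl) ?_
    intro j hj1 hj2
    obtain ⟨i, rfl⟩ : ∃ i, j = n + 1 + i := ⟨j - (n + 1), by omega⟩
    rw [hfl i (by omega)]
    have := hq (d - i)
    have hfloor : ⌊((3 ^ i * (k1 + 1) : ℤ) : ℝ) + ((-2 : ℤ) : ℝ) * (1 / 3 ^ (d - i + 1))⌋
        = 3 ^ i * (k1 + 1) - 1 := by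
      rw [Int.floor_eq_iff]
      push_cast
      constructor <;> linarith
    rw [hfloor]
    rcases i with _ | i
    · simp [h3]
    · rw [pow_succ, mul_comm _ (3:ℤ), mul_assoc]
      omega
  · refine key 1 (Or.inr rfl) ?_
    intro j hj1 hj2
    obtain ⟨i, rfl⟩ : ∃ i, j = n + 1 + i := ⟨j - (n + 1), by omega⟩
    rw [hfl i (by omega)]
    have := hq (d - i)
    have hfloor : ⌊((3 ^ i * (k1 + 1) : ℤ) : ℝ) + ((1 : ℤ) : ℝ) * (1 / 3 ^ (d - i + 1))⌋
        = 3 ^ i * (k1 + 1) := by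
      rw [Int.floor_eq_iff]
      push_cast
      constructor <;> linarith
    rw [hfloor]
    rcases i with _ | i
    · simp only [pow_zero, one_mul]; omega
    · rw [pow_succ, mul_comm _ (3:ℤ), mul_assoc]
      omega

open Classical in
/-- The map from the plane to the model. -/
noncomputable def pmap {W : Type} (R : W → W → Prop) (v : ℕ → Set W) (w0 ws : W)
    (p : ℝ × ℝ) : W :=
  if p.1 + p.2 < 3 / 2 then ilab R v w0 p.1 (3 / 2 - p.2) else wit R v ws (dec ⌊p.2⌋₊)

theorem fits_zero {x z : ℝ} (h1 : 0 ≤ x) (h2 : z ≤ 1 / 2) : Fits 0 x z := by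
  unfold Fits
  have : (0:ℤ) ≤ ⌊(3:ℝ) ^ 0 * x⌋ := by
    rw [Int.floor_nonneg]; simpa using h1
  have h' : (0:ℝ) ≤ (⌊(3:ℝ) ^ 0 * x⌋ : ℝ) := by exact_mod_cast this
  simp only [pow_zero, one_mul] at h' ⊢
  linarith

theorem truth {W X : Type} {R : W → W → Prop} (hr : ∀ w, R w w)
    (ht : ∀ a b c, R a b → R b c → R a c) (hd : ∀ a b, ∃ c, R a c ∧ R b c)
    (v : ℕ → Set W) (w0 ws : W) (e : X → ℝ × ℝ)
    (he : ∀ p : ℝ × ℝ, p.1 < p.2 → ∃ a, e a = p)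
    (hup : ∀ a y, (e a).2 ≤ y → ∃ b, e b = ((e a).1, y)) (φ : TForm) (hφ : noPast φ)
    (hs : Stab R v ws φ) : ∀ a, ((0:ℝ), (1:ℝ)) ≤ e a →
      (TSat (fun a b => e a ≤ e b) (fun n => {a | pmap R v w0 ws (e a) ∈ v n}) φ a ↔
        TSat R v φ (pmap R v w0 ws (e a))) := by
  induction φ with
  | prop n => intro a _; rfl
  | neg φ ih => intro a ha; exact not_congr (ih hφ hs a ha)
  | or φ ψ ih1 ih2 =>
    intro a ha
    exact or_congr (ih1 hφ.1 hs.1 a ha) (ih2 hφ.2 hs.2 a ha)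
  | past φ _ => exact hφ.elim
  | fut φ ih =>
    intro a ha
    have ih := ih hφ hs.1
    have ha1 : 0 ≤ (e a).1 := ha.1
    have ha2 : 1 ≤ (e a).2 := ha.2
    constructor
    · rintro ⟨b, hab, hb⟩
      have hb' := (ih b (ha.trans hab)).1 hb
      have h1 : (e a).1 ≤ (e b).1 := hab.1
      have h2 : (e a).2 ≤ (e b).2 := hab.2
      by_cases hT : (e b).1 + (e b).2 < 3 / 2
      · refine ⟨_, ?_, hb'⟩
        unfold pmap
        rw [if_pos hT, if_pos (by linarith)]
        exact ilab_mono hr ht v w0 (fits_zero ha1 (by linarith)) h1 (by linarith) (by linarith)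
      · have hw : TSat R v (.fut φ) ws := by
          refine ⟨_, ?_, hb'⟩
          unfold pmap
          rw [if_neg hT]
          exact wit_rel hr _ _ _
        obtain ⟨c, hc1, hc2⟩ := hd (pmap R v w0 ws (e a)) ws
        exact fut_down ht hc1 (hs.2 c hc2 hw)
    · intro hf
      by_cases hT : (e a).1 + (e a).2 < 3 / 2
      · obtain ⟨x', z', h1, h2, h3, h4⟩ := ilab_wit R v w0 (x := (e a).1) (z := 3 / 2 - (e a).2) φ
          (fits_zero ha1 (by linarith)) (by linarith)
        obtain ⟨b, hb⟩ := he (x', 3 / 2 - z') (by simp only; linarith)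
        have hab : e a ≤ e b := by
          rw [hb]; exact ⟨h1, by simp only; linarith⟩
        refine ⟨b, hab, (ih b (ha.trans hab)).2 ?_⟩
        have e1 : pmap R v w0 ws (e b) = wit R v (pmap R v w0 ws (e a)) φ := by
          rw [hb]
          unfold pmap
          rw [if_pos hT, if_pos (by simp only; linarith), ← h4]
          simp
        rw [e1]
        exact wit_sat hf
      · have hw : TSat R v (.fut φ) ws := by
          refine fut_down ht ?_ hf
          unfold pmap
          rw [if_neg hT]
          exact wit_rel hr _ _ _
        obtain ⟨n, hn, hdn⟩ := dec_large φ ⌈(e a).2⌉₊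
        have hle : (e a).2 ≤ (n:ℝ) := (Nat.le_ceil _).trans (by exact_mod_cast hn)
        obtain ⟨b, hb⟩ := hup a n hle
        have hab : e a ≤ e b := by
          rw [hb]; exact ⟨le_rfl, hle⟩
        refine ⟨b, hab, (ih b (ha.trans hab)).2 ?_⟩
        have e1 : pmap R v w0 ws (e b) = wit R v ws φ := by
          rw [hb]
          unfold pmap
          rw [if_neg (by simp only; linarith)]
          simp [hdn]
        rw [e1]
        exact wit_sat hw

theorem transfer {W X : Type} {R : W → W → Prop} (hr : ∀ w, R w w)
    (ht : ∀ a b c, R a b → R b c → R a c) (hd : ∀ a b, ∃ c, R a c ∧ R b c)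
    (e : X → ℝ × ℝ)
    (he : ∀ p : ℝ × ℝ, p.1 < p.2 → ∃ a, e a = p)
    (hup : ∀ a y, (e a).2 ≤ y → ∃ b, e b = ((e a).1, y)) (φ : TForm) (hφ : noPast φ)
    (h : TSatisfiable R φ) : TSatisfiable (fun a b => e a ≤ e b) φ := by
  obtain ⟨v, w0, hw⟩ := h
  obtain ⟨ws, -, hs⟩ := exists_stab hr ht v φ w0
  obtain ⟨a, ha⟩ := he (0, 1) (by norm_num)
  refine ⟨_, a, (truth hr ht hd v w0 ws e he hup φ hφ hs a ha.ge).2 ?_⟩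
  have : pmap R v w0 ws (e a) = w0 := by
    rw [ha]
    unfold pmap
    rw [if_pos (by norm_num)]
    have hl : lev (0:ℝ) (3 / 2 - 1) = 0 := by
      refine lev_eq (by norm_num) (fits_zero le_rfl (by norm_num)) ?_
      unfold Fits
      norm_num
    simp only [ilab, hl, lab]
  rwa [this]

end Aux

/-- A purely modal formula is satisfiable over `(ℝ², ≤)` iff it is satisfiable over
`(D, ≤)`, where `D = {(x,y) ∈ ℝ² : y > x}` is the open half-plane above the
diagonal and `≤` is the componentwise order (restricted to `D` in the second
frame). -/
theorem modal_sat_R2_iff_sat_halfplane (φ : TForm) (hφ : noPast φ) :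
    TSatisfiable (fun p q : ℝ × ℝ => p ≤ q) φ ↔
      TSatisfiable (fun p q : {p : ℝ × ℝ // p.1 < p.2} => p.val ≤ q.val) φ := by
  constructor
  · intro h
    refine transfer (fun w => le_refl w) (fun a b c => le_trans)
      (fun a b => ⟨a ⊔ b, le_sup_left, le_sup_right⟩) Subtype.val
      (fun p hp => ⟨⟨p, hp⟩, rfl⟩) (fun a y hy => ⟨⟨(a.1.1, y), a.2.trans_le hy⟩, rfl⟩) φ hφ h
  · intro h
    refine transfer (W := {p : ℝ × ℝ // p.1 < p.2}) (X := ℝ × ℝ)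
      (R := fun p q => p.val ≤ q.val) (fun w => le_refl w.1) (fun a b c => le_trans)
      (fun a b => ⟨⟨a.1 ⊔ b.1, ?_⟩, le_sup_left, le_sup_right⟩) id
      (fun p _ => ⟨p, rfl⟩) (fun a y _ => ⟨(a.1, y), rfl⟩) φ hφ h
    exact max_lt_max a.2 b.2

end Temporal
end

section
/- Let λ : ℝ → (0,1) be an order isomorphism from ℝ onto the open interval (0,1). Let 𝓘 = {(x,y) ∈ ℝ² : x < y} (the set of intervals with real endpoints) and let A = {(x,y) ∈ ℝ² : 0 < x < 1, 0 < y < 1, x + y > 1}. Then the map f(x,y) = (1 − λ(x), λ(y)) is a bijection from 𝓘 onto A such that for all i, j ∈ 𝓘: i ⊂ j if and only if f(i) < f(j), where ⊂ is strict interval containment ((x,y) ⊂ (x',y') iff x' ≤ x, y ≤ y' and (x,y) ≠ (x',y')) and < is the irreflexive part of the componentwise order on ℝ². In particular, the frames (𝓘, ⊂) and (A, <) are isomorphic. -/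
/-- Let `λ : ℝ → (0,1)` be an order isomorphism from ℝ onto the open unit interval
(a strictly monotone map with range `(0,1)`).  Then `f(x,y) = (1 − λ(x), λ(y))` is a
bijection from `𝓘 = {(x,y) : x < y}` (the set of intervals with real endpoints)
onto the triangle `A = {(x,y) : 0 < x < 1, 0 < y < 1, x + y > 1}`, and for all
`i, j ∈ 𝓘`, `i` is strictly contained in `j` iff `f(i) < f(j)` in the irreflexive
part of the componentwise order.  In particular the frames `(𝓘, ⊂)` and `(A, <)`
are isomorphic. -/
theorem interval_frame_iso_triangle (lam : ℝ → ℝ) (hmono : StrictMono lam)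
    (hrange : Set.range lam = Set.Ioo 0 1) :
    Set.BijOn (fun p : ℝ × ℝ => ((1 - lam p.1, lam p.2) : ℝ × ℝ))
      {p : ℝ × ℝ | p.1 < p.2}
      {p : ℝ × ℝ | 0 < p.1 ∧ p.1 < 1 ∧ 0 < p.2 ∧ p.2 < 1 ∧ 1 < p.1 + p.2} ∧
    ∀ i ∈ {p : ℝ × ℝ | p.1 < p.2}, ∀ j ∈ {p : ℝ × ℝ | p.1 < p.2},
      (j.1 ≤ i.1 ∧ i.2 ≤ j.2 ∧ i ≠ j) ↔
        (((1 - lam i.1, lam i.2) : ℝ × ℝ) ≤ ((1 - lam j.1, lam j.2) : ℝ × ℝ) ∧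
          ((1 - lam i.1, lam i.2) : ℝ × ℝ) ≠ ((1 - lam j.1, lam j.2) : ℝ × ℝ)) := by
  have hb : ∀ x, 0 < lam x ∧ lam x < 1 := fun x => by
    have h : lam x ∈ Set.Ioo (0 : ℝ) 1 := hrange ▸ Set.mem_range_self x
    exact h
  refine ⟨⟨?_, ?_, ?_⟩, ?_⟩
  · rintro ⟨x, y⟩ hxy
    have h1 := hb x
    have h2 := hb y
    have h3 : lam x < lam y := hmono hxy
    refine ⟨?_, ?_, ?_, ?_, ?_⟩ <;> dsimp only <;> linarith
  · rintro ⟨x, y⟩ _ ⟨x', y'⟩ _ h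
    simp only [Prod.mk.injEq, sub_right_inj, hmono.injective.eq_iff] at h
    exact Prod.ext h.1 h.2
  · rintro ⟨a, b⟩ ⟨h1, h2, h3, h4, h5⟩
    dsimp only at h1 h2 h3 h4 h5
    have ha : 1 - a ∈ Set.range lam := by
      rw [hrange]; constructor <;> linarith
    have hb' : b ∈ Set.range lam := by
      rw [hrange]; exact ⟨h3, h4⟩
    obtain ⟨x, hx⟩ := ha
    obtain ⟨y, hy⟩ := hb'
    refine ⟨(x, y), ?_, ?_⟩
    · have : lam x < lam y := by linarith
      exact hmono.lt_iff_lt.1 this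
    · simp [hx, hy]
  · rintro ⟨x, y⟩ _ ⟨x', y'⟩ _
    simp only [Prod.mk_le_mk, ne_eq, Prod.mk.injEq, sub_right_inj, hmono.injective.eq_iff,
      sub_le_sub_iff_left, hmono.le_iff_le, and_assoc]
end

section
/- Let P₁ be the finite strict partial order with ten elements u, s, p₀⁻, p₀⁺, p₁⁻, p₁⁺, p₂⁻, p₂⁺, p₃⁻, p₃⁺, whose strict order is generated transitively by u < pᵢ⁻ < pᵢ⁺ < s for each i ∈ {0,1,2,3} (so also u < pᵢ⁺, u < s, pᵢ⁻ < s), with pᵢ^± incomparable to pⱼ^± for i ≠ j. Then the temporal formula Δ(P₁) is satisfiable over (ℚ², ≤) and over (ℚ², <), but it is not satisfiable over (ℝ², ≤) and not satisfiable over (ℝ², <), where ≤ is the componentwise order (on ℚ² respectively ℝ²) and < its irreflexive part. -/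
namespace Temporal

/-- Conjunction, defined from negation and disjunction. -/
def TForm.and (a b : TForm) : TForm := .neg (.or (.neg a) (.neg b))

/-- Implication, defined from negation and disjunction. -/
def TForm.imp (a b : TForm) : TForm := .or (.neg a) b

/-- The operator `G = ¬F¬`. -/
def TForm.G (a : TForm) : TForm := .neg (.fut (.neg a))

/-- The operator `H = ¬P¬`. -/
def TForm.H (a : TForm) : TForm := .neg (.past (.neg a))

/-- Disjunction of a list of formulas (`⊥` for the empty list). -/
def bigOr : List TForm → TForm
  | [] => TForm.neg (.or (.prop 0) (.neg (.prop 0)))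
  | [a] => a
  | a :: rest => .or a (bigOr rest)

/-- Conjunction of a list of formulas (`⊤` for the empty list). -/
def bigAnd : List TForm → TForm
  | [] => TForm.or (.prop 0) (.neg (.prop 0))
  | [a] => a
  | a :: rest => TForm.and a (bigAnd rest)

/-- The formula `Δ(P)` of a finite transitive relation `P` (on `Fin n`, with a
distinct propositional variable for each element):
`Δ(P) = G H [ ⋁_{p} p ∧ ⋀_{p≠q} ¬(p∧q) ∧ ⋀_{p≠q, p<q} ((p→Fq)∧(q→Pp))
∧ ⋀_{p≠q, ¬(p<q)} ((p→G¬q)∧(q→H¬p)) ]`. -/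
def delta (n : ℕ) (lt : Fin n → Fin n → Bool) : TForm :=
  TForm.G (TForm.H (TForm.and
    (bigOr ((List.finRange n).map fun p => .prop p.val))
    (bigAnd ((List.finRange n).flatMap fun p =>
      (List.finRange n).flatMap fun q =>
        if p = q then [] else
          [TForm.and (.neg (TForm.and (.prop p.val) (.prop q.val)))
            (if lt p q then
              TForm.and (TForm.imp (.prop p.val) (.fut (.prop q.val)))
                (TForm.imp (.prop q.val) (.past (.prop p.val)))
            else
              TForm.and (TForm.imp (.prop p.val) (TForm.G (.neg (.prop q.val))))
                (TForm.imp (.prop q.val) (TForm.H (.neg (.prop p.val)))))]))))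

/-- The strict partial order `P₁`: elements `0 = u`, `1 = s`, and `2i+2 = pᵢ⁻`,
`2i+3 = pᵢ⁺` for `i ∈ {0,1,2,3}`; generated transitively by
`u < pᵢ⁻ < pᵢ⁺ < s`, with `pᵢ^±` incomparable to `pⱼ^±` for `i ≠ j`. -/
def ltP1 (a b : Fin 10) : Bool :=
  (a.val == 0 && b.val != 0) || (b.val == 1 && a.val != 1) ||
    (a.val % 2 == 0 && decide (2 ≤ a.val) && b.val == a.val + 1)

section Sem
variable {X : Type*} (R : X → X → Prop) (v : ℕ → Set X)

theorem tsat_and (a b : TForm) (x : X) :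
    TSat R v (TForm.and a b) x ↔ TSat R v a x ∧ TSat R v b x := by
  simp only [TForm.and, TSat]; tauto

theorem tsat_imp (a b : TForm) (x : X) :
    TSat R v (TForm.imp a b) x ↔ (TSat R v a x → TSat R v b x) := by
  simp only [TForm.imp, TSat]; tauto

theorem tsat_G (a : TForm) (x : X) :
    TSat R v (TForm.G a) x ↔ ∀ y, R x y → TSat R v a y := by
  simp only [TForm.G, TSat]; push Not; rfl

theorem tsat_H (a : TForm) (x : X) :
    TSat R v (TForm.H a) x ↔ ∀ y, R y x → TSat R v a y := by
  simp only [TForm.H, TSat]; push Not; rfl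

theorem tsat_bigOr (l : List TForm) (x : X) :
    TSat R v (bigOr l) x ↔ ∃ φ ∈ l, TSat R v φ x := by
  induction l with
  | nil => simp [bigOr, TSat]
  | cons a l ih =>
    cases l with
    | nil => simp [bigOr]
    | cons b l => simp only [bigOr, TSat] at ih ⊢; rw [ih]; simp

theorem tsat_bigAnd (l : List TForm) (x : X) :
    TSat R v (bigAnd l) x ↔ ∀ φ ∈ l, TSat R v φ x := by
  induction l with
  | nil => simp [bigAnd, TSat]; exact Classical.em _
  | cons a l ih =>
    cases l with
    | nil => simp [bigAnd]
    | cons b l => simp only [bigAnd, tsat_and] at ih ⊢; rw [ih]; simp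

theorem delta_sat_iff (n : ℕ) (lt : Fin n → Fin n → Bool) (x : X) :
    TSat R v (delta n lt) x ↔ ∀ z, R x z → ∀ y, R y z →
      (∃ p : Fin n, y ∈ v p) ∧ ∀ p q : Fin n, p ≠ q →
        ¬ (y ∈ v p ∧ y ∈ v q) ∧
        (lt p q = true → (y ∈ v p → ∃ w, R y w ∧ w ∈ v q) ∧ (y ∈ v q → ∃ w, R w y ∧ w ∈ v p)) ∧
        (lt p q = false → (y ∈ v p → ∀ w, R y w → w ∉ v q) ∧
          (y ∈ v q → ∀ w, R w y → w ∉ v p)) := by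
  simp only [delta, tsat_G, tsat_H, tsat_and, tsat_bigOr, tsat_bigAnd]
  refine forall_congr' fun z => forall_congr' fun _ => forall_congr' fun y => forall_congr' fun _ => ?_
  refine and_congr ?_ ?_
  · simp [TSat]
  · constructor
    · intro h p q hpq
      have := h _ (List.mem_flatMap.2 ⟨p, List.mem_finRange p, List.mem_flatMap.2
        ⟨q, List.mem_finRange q, by rw [if_neg hpq]; exact List.mem_singleton.2 rfl⟩⟩)
      rw [tsat_and] at this
      refine ⟨?_, ?_, ?_⟩
      · have := this.1
        simp only [TSat, tsat_and] at this
        exact this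
      · intro hl
        have := this.2
        simp only [hl, if_true, tsat_and, tsat_imp, TSat] at this
        exact this
      · intro hl
        have := this.2
        simpa [hl, tsat_and, tsat_imp, TSat, tsat_G, tsat_H] using this
    · intro h φ hφ
      obtain ⟨p, -, hφ⟩ := List.mem_flatMap.1 hφ
      obtain ⟨q, -, hφ⟩ := List.mem_flatMap.1 hφ
      by_cases hpq : p = q
      · simp [hpq] at hφ
      · rw [if_neg hpq, List.mem_singleton] at hφ
        subst hφ
        obtain ⟨h1, h2, h3⟩ := h p q hpq
        rw [tsat_and]
        refine ⟨by simpa only [TSat, tsat_and] using h1, ?_⟩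
        cases hl : lt p q
        · simpa [tsat_and, tsat_imp, TSat, tsat_G, tsat_H] using h3 hl
        · simpa [tsat_and, tsat_imp, TSat, tsat_G, tsat_H] using h2 hl

/-- A map that is monotone and has the back-and-forth property for both directions. -/
structure BiMorph (n : ℕ) (lt : Fin n → Fin n → Bool) (f : X → Fin n) : Prop where
  mono : ∀ x y, R x y → f x ≠ f y → lt (f x) (f y) = true
  up : ∀ x q, q ≠ f x → lt (f x) q = true → ∃ y, R x y ∧ f y = q
  down : ∀ x q, q ≠ f x → lt q (f x) = true → ∃ y, R y x ∧ f y = q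

theorem sat_iff_biMorph [Nonempty X] (hR : ∀ x y, ∃ z, R x z ∧ R y z)
    (n : ℕ) (lt : Fin n → Fin n → Bool) :
    TSatisfiable R (delta n lt) ↔ ∃ f : X → Fin n, BiMorph R n lt f := by
  constructor
  · rintro ⟨v, x, h⟩
    rw [delta_sat_iff] at h
    replace h := fun y => h (hR x y).choose (hR x y).choose_spec.1 y (hR x y).choose_spec.2
    choose f hf using fun y => (h y).1
    have key : ∀ (y : X) (p : Fin n), y ∈ v p ↔ f y = p := by
      intro y p
      constructor
      · intro hy
        by_contra hne
        exact ((h y).2 _ _ hne).1 ⟨hf y, hy⟩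
      · rintro rfl; exact hf y
    refine ⟨f, ⟨?_, ?_, ?_⟩⟩
    · intro x y hxy hne
      by_contra hl
      exact (((h x).2 _ _ hne).2.2 (by simpa using hl)).1 (hf x) y hxy (hf y)
    · intro x q hq hl
      obtain ⟨w, h1, h2⟩ := (((h x).2 _ _ hq.symm).2.1 hl).1 (hf x)
      exact ⟨w, h1, (key _ _).1 h2⟩
    · intro x q hq hl
      obtain ⟨w, h1, h2⟩ := (((h x).2 _ _ hq).2.1 hl).2 (hf x)
      exact ⟨w, h1, (key _ _).1 h2⟩
  · rintro ⟨f, h⟩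
    refine ⟨fun k => {x | (f x).val = k}, Classical.arbitrary X, ?_⟩
    rw [delta_sat_iff]
    intro z _ y _
    simp only [Set.mem_ofPred_eq, Fin.val_inj]
    refine ⟨⟨f y, rfl⟩, ?_⟩
    intro p q hpq
    refine ⟨by rintro ⟨h1, h2⟩; exact hpq (h1.symm.trans h2), fun hl => ⟨?_, ?_⟩, fun hl => ⟨?_, ?_⟩⟩
    · rintro rfl; exact h.up y q hpq.symm hl
    · rintro rfl; exact h.down y p hpq hl
    · rintro rfl w hw rfl
      simp [h.mono _ _ hw hpq] at hl
    · rintro rfl w hw rfl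
      simp [h.mono _ _ hw hpq] at hl

theorem biMorph_strict (n : ℕ) (lt : Fin n → Fin n → Bool) (f : X → Fin n) :
    BiMorph (fun x y => R x y ∧ x ≠ y) n lt f ↔ BiMorph R n lt f := by
  constructor
  · intro h
    refine ⟨fun x y hxy hne => h.mono x y ⟨hxy, fun e => hne (by rw [e])⟩ hne, ?_, ?_⟩
    · intro x q h1 h2
      obtain ⟨y, h3, h4⟩ := h.up x q h1 h2
      exact ⟨y, h3.1, h4⟩
    · intro x q h1 h2
      obtain ⟨y, h3, h4⟩ := h.down x q h1 h2
      exact ⟨y, h3.1, h4⟩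
  · intro h
    refine ⟨fun x y hxy hne => h.mono x y hxy.1 hne, ?_, ?_⟩
    · intro x q h1 h2
      obtain ⟨y, h3, h4⟩ := h.up x q h1 h2
      exact ⟨y, ⟨h3, by rintro rfl; exact h1 h4.symm⟩, h4⟩
    · intro x q h1 h2
      obtain ⟨y, h3, h4⟩ := h.down x q h1 h2
      exact ⟨y, ⟨h3, by rintro rfl; exact h1 h4.symm⟩, h4⟩
end Sem

theorem mk_nat_bool : Cardinal.mk (ℕ → Bool) = Cardinal.continuum := by simp

/-- The abstract configuration on `ℝ²` induced by a morphism onto `P₁`. -/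
structure Cfg (U S : ℝ → ℝ → Prop) (M : Fin 4 → ℝ → ℝ → Prop) : Prop where
  cover : ∀ a b, U a b ∨ S a b ∨ ∃ j, M j a b
  US : ∀ a b, U a b → S a b → False
  UM : ∀ j a b, U a b → M j a b → False
  SM : ∀ j a b, S a b → M j a b → False
  Udown : ∀ a b a' b', a ≤ a' → b ≤ b' → U a' b' → U a b
  Sup : ∀ a b a' b', a ≤ a' → b ≤ b' → S a b → S a' b'
  Meq : ∀ i j a b a' b', a ≤ a' → b ≤ b' → M i a b → M j a' b' → i = j
  Usee : ∀ a b, U a b → ∀ j, ∃ a' b', a ≤ a' ∧ b ≤ b' ∧ M j a' b'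
  Ssee : ∀ a b, S a b → ∀ j, ∃ a' b', a' ≤ a ∧ b' ≤ b ∧ M j a' b'
  Mnontriv : ∀ j a b, M j a b → ∃ a' b', (a' ≠ a ∨ b' ≠ b) ∧
    ((a ≤ a' ∧ b ≤ b') ∨ (a' ≤ a ∧ b' ≤ b)) ∧ M j a' b'
  Uex : ∀ a b, ∃ a' b', a' ≤ a ∧ b' ≤ b ∧ U a' b'
  Sex : ∀ a b, ∃ a' b', a ≤ a' ∧ b ≤ b' ∧ S a' b'

namespace Cfg
variable {U S : ℝ → ℝ → Prop} {M : Fin 4 → ℝ → ℝ → Prop}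

theorem dual (h : Cfg U S M) : Cfg (fun a b => S (-a) (-b)) (fun a b => U (-a) (-b))
    (fun j a b => M j (-a) (-b)) where
  cover a b := by have := h.cover (-a) (-b); tauto
  US a b h1 h2 := h.US _ _ h2 h1
  UM j a b := h.SM j _ _
  SM j a b := h.UM j _ _
  Udown a b a' b' h1 h2 := h.Sup _ _ _ _ (by linarith) (by linarith)
  Sup a b a' b' h1 h2 := h.Udown _ _ _ _ (by linarith) (by linarith)
  Meq i j a b a' b' h1 h2 h3 h4 := (h.Meq j i _ _ _ _ (by linarith) (by linarith) h4 h3).symm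
  Usee a b h1 j := by
    obtain ⟨x, y, h2, h3, h4⟩ := h.Ssee _ _ h1 j
    exact ⟨-x, -y, by linarith, by linarith, by simpa using h4⟩
  Ssee a b h1 j := by
    obtain ⟨x, y, h2, h3, h4⟩ := h.Usee _ _ h1 j
    exact ⟨-x, -y, by linarith, by linarith, by simpa using h4⟩
  Mnontriv j a b h1 := by
    obtain ⟨x, y, h2, h3, h4⟩ := h.Mnontriv j _ _ h1
    refine ⟨-x, -y, ?_, ?_, by simpa using h4⟩
    · rcases h2 with h2 | h2
      · left; intro e; apply h2; linarith
      · right; intro e; apply h2; linarith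
    · rcases h3 with h3 | h3
      · right; constructor <;> linarith
      · left; constructor <;> linarith
  Uex a b := by
    obtain ⟨x, y, h2, h3, h4⟩ := h.Sex (-a) (-b)
    exact ⟨-x, -y, by linarith, by linarith, by simpa using h4⟩
  Sex a b := by
    obtain ⟨x, y, h2, h3, h4⟩ := h.Uex (-a) (-b)
    exact ⟨-x, -y, by linarith, by linarith, by simpa using h4⟩

theorem swap (h : Cfg U S M) : Cfg (fun a b => U b a) (fun a b => S b a)
    (fun j a b => M j b a) where
  cover a b := h.cover b a
  US a b := h.US b a
  UM j a b := h.UM j b a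
  SM j a b := h.SM j b a
  Udown a b a' b' h1 h2 := h.Udown _ _ _ _ h2 h1
  Sup a b a' b' h1 h2 := h.Sup _ _ _ _ h2 h1
  Meq i j a b a' b' h1 h2 := h.Meq i j _ _ _ _ h2 h1
  Usee a b h1 j := by
    obtain ⟨x, y, h2, h3, h4⟩ := h.Usee _ _ h1 j
    exact ⟨y, x, h3, h2, h4⟩
  Ssee a b h1 j := by
    obtain ⟨x, y, h2, h3, h4⟩ := h.Ssee _ _ h1 j
    exact ⟨y, x, h3, h2, h4⟩
  Mnontriv j a b h1 := by
    obtain ⟨x, y, h2, h3, h4⟩ := h.Mnontriv j _ _ h1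
    exact ⟨y, x, h2.symm, by tauto, h4⟩
  Uex a b := by
    obtain ⟨x, y, h2, h3, h4⟩ := h.Uex b a
    exact ⟨y, x, h3, h2, h4⟩
  Sex a b := by
    obtain ⟨x, y, h2, h3, h4⟩ := h.Sex b a
    exact ⟨y, x, h3, h2, h4⟩

theorem Uopen (h : Cfg U S M) (a b : ℝ) (hU : U a b) : ∃ ε > 0, U (a + ε) (b + ε) := by
  by_contra hno
  push Not at hno
  choose x y hx hy hM using h.Usee a b hU
  -- three classes of positions relative to `(a, b)`
  let c : Fin 4 → Fin 3 := fun j => if x j = a then 0 else if y j = b then 1 else 2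
  obtain ⟨i, j, hij, hc⟩ := Fintype.exists_ne_map_eq_of_card_lt c (by simp)
  have comp : ¬ ((x i ≤ x j ∧ y i ≤ y j) ∨ (x j ≤ x i ∧ y j ≤ y i)) := by
    rintro (⟨h1, h2⟩ | ⟨h1, h2⟩)
    · exact hij (h.Meq _ _ _ _ _ _ h1 h2 (hM i) (hM j))
    · exact hij (h.Meq _ _ _ _ _ _ h1 h2 (hM j) (hM i)).symm
  have hc' : (x i = a ∧ x j = a) ∨ (y i = b ∧ y j = b) ∨
      (x i ≠ a ∧ x j ≠ a ∧ y i ≠ b ∧ y j ≠ b) := by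
    simp only [c] at hc
    split_ifs at hc <;> simp_all
  rcases hc' with ⟨h1, h2⟩ | ⟨h1, h2⟩ | ⟨h1, h2, h3, h4⟩
  · apply comp
    rcases le_total (y i) (y j) with h3 | h3
    · left; exact ⟨by rw [h1, h2], h3⟩
    · right; exact ⟨by rw [h1, h2], h3⟩
  · apply comp
    rcases le_total (x i) (x j) with h3 | h3
    · left; exact ⟨h3, by rw [h1, h2]⟩
    · right; exact ⟨h3, by rw [h1, h2]⟩
  · have k1 := lt_of_le_of_ne (hx i) h1.symm
    have k2 := lt_of_le_of_ne (hx j) h2.symm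
    have k3 := lt_of_le_of_ne (hy i) h3.symm
    have k4 := lt_of_le_of_ne (hy j) h4.symm
    obtain ⟨ε, he, e1⟩ : ∃ ε > 0, ε ≤ x i - a ∧ ε ≤ x j - a ∧ ε ≤ y i - b ∧ ε ≤ y j - b :=
      ⟨min (min (x i - a) (x j - a)) (min (y i - b) (y j - b)),
        by simp only [gt_iff_lt, lt_min_iff]; refine ⟨⟨?_, ?_⟩, ?_, ?_⟩ <;> linarith,
        by simp, by simp, by simp, by simp⟩
    obtain ⟨e1, e2, e3, e4⟩ := e1
    rcases h.cover (a + ε) (b + ε) with g | g | ⟨k, g⟩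
    · exact hno ε he g
    · exact h.SM i _ _ (h.Sup _ _ (x i) (y i) (by linarith) (by linarith) g) (hM i)
    · have q1 := h.Meq _ _ _ _ _ _ (by linarith) (by linarith) g (hM i)
      have q2 := h.Meq _ _ _ _ _ _ (by linarith) (by linarith) g (hM j)
      exact hij (q1.symm.trans q2)

theorem Sopen (h : Cfg U S M) (a b : ℝ) (hS : S a b) : ∃ ε > 0, S (a - ε) (b - ε) := by
  obtain ⟨ε, he, g⟩ := h.dual.Uopen (-a) (-b) (by simpa using hS)
  refine ⟨ε, he, ?_⟩
  convert g using 1 <;> ring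

theorem exM (h : Cfg U S M) (t : ℝ) : ∃ j b, M j (t + b) b := by
  by_contra hno
  push Not at hno
  have hcov : ∀ b, U (t + b) b ∨ S (t + b) b := by
    intro b
    rcases h.cover (t + b) b with g | g | ⟨j, g⟩
    · exact Or.inl g
    · exact Or.inr g
    · exact absurd g (hno j b)
  have oU : IsOpen {b | U (t + b) b} := by
    rw [Metric.isOpen_iff]
    intro b hb
    obtain ⟨ε, he, g⟩ := h.Uopen _ _ hb
    refine ⟨ε, he, fun c hc => ?_⟩
    rw [Metric.mem_ball, Real.dist_eq, abs_lt] at hc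
    exact h.Udown _ _ _ _ (by linarith) (by linarith) g
  have oS : IsOpen {b | S (t + b) b} := by
    rw [Metric.isOpen_iff]
    intro b hb
    obtain ⟨ε, he, g⟩ := h.Sopen _ _ hb
    refine ⟨ε, he, fun c hc => ?_⟩
    rw [Metric.mem_ball, Real.dist_eq, abs_lt] at hc
    exact h.Sup _ _ _ _ (by linarith) (by linarith) g
  obtain ⟨p, q, h1, h2, h3⟩ := h.Uex t 0
  obtain ⟨p', q', h1', h2', h3'⟩ := h.Sex t 0
  have := isPreconnected_univ (α := ℝ) _ _ oU oS (fun b _ => hcov b)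
    ⟨min (p - t) q, trivial, h.Udown _ _ _ _
      (by linarith [min_le_left (p - t) q]) (min_le_right _ _) h3⟩
    ⟨max (p' - t) q', trivial, h.Sup _ _ _ _
      (by linarith [le_max_left (p' - t) q']) (le_max_right _ _) h3'⟩
  obtain ⟨b, -, hb1, hb2⟩ := this
  exact h.US _ _ hb1 hb2

theorem noLeft (h : Cfg U S M) (i k : Fin 4) (hik : i ≠ k) (a b ε : ℝ) (he : 0 < ε)
    (hM : M i a b) (hl : ∀ j a' b', a - b - ε < a' - b' → a' - b' < a - b → M j a' b' → j = k) :
    False := by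
  have hv : U (a - ε / 2) b := by
    rcases h.cover (a - ε / 2) b with g | g | ⟨j, g⟩
    · exact g
    · exact (h.SM i _ _ (h.Sup _ _ a b (by linarith) le_rfl g) hM).elim
    · have := hl j _ _ (by linarith) (by linarith) g
      have := h.Meq _ _ _ _ _ _ (by linarith) le_rfl g hM
      exact (hik (by simp_all)).elim
  obtain ⟨δ, hδ, hv'⟩ := h.Uopen _ _ hv
  obtain ⟨c, hc, hc1, hc2⟩ : ∃ c > 0, c ≤ δ ∧ c ≤ ε / 2 :=
    ⟨min δ (ε / 2), by positivity, min_le_left _ _, min_le_right _ _⟩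
  have hz : S a (b + c) := by
    rcases h.cover a (b + c) with g | g | ⟨j, g⟩
    · exact (h.UM i _ _ (h.Udown a b _ _ le_rfl (by linarith) g) hM).elim
    · exact g
    · have := hl j _ _ (by linarith) (by linarith) g
      have := h.Meq _ _ _ _ _ _ le_rfl (by linarith) hM g
      exact (hik (by simp_all)).elim
  obtain ⟨l, hli, hlk⟩ : ∃ l : Fin 4, l ≠ i ∧ l ≠ k := by
    clear hl hM hik; revert i k; decide
  obtain ⟨p, q, hp, hq, hw⟩ := h.Ssee _ _ hz l
  have hqb : b < q := by
    by_contra hqb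
    exact hli (h.Meq _ _ _ _ _ _ hp (not_lt.1 hqb) hw hM)
  have ht : p - q ≤ a - b - ε := by
    by_contra ht
    exact hlk (hl l p q (not_le.1 ht) (by linarith) hw)
  exact h.UM l p q (h.Udown _ _ _ _ (by linarith) (by linarith) hv') hw

theorem noRight (h : Cfg U S M) (i k : Fin 4) (hik : i ≠ k) (a b ε : ℝ) (he : 0 < ε)
    (hM : M i a b) (hl : ∀ j a' b', a - b < a' - b' → a' - b' < a - b + ε → M j a' b' → j = k) :
    False :=
  h.swap.noLeft i k hik b a ε he hM
    (fun j a' b' h1 h2 hm => hl j b' a' (by linarith) (by linarith) hm)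

theorem false (h : Cfg U S M) : False := by
  choose T B hT using h.exM
  have key : ∀ j a b, M j a b → j = T (a - b) := by
    intro j a b hm
    rcases le_total (B (a - b)) b with g | g
    · exact (h.Meq _ _ _ _ _ _ (by linarith) g (hT (a - b)) hm).symm
    · exact h.Meq _ _ _ _ _ _ (by linarith) g hm (hT (a - b))
  have box : ∀ j a b a' b' c d, M j a b → M j a' b' → a ≤ c → c ≤ a' → b ≤ d → d ≤ b' →
      M j c d := by
    intro j a b a' b' c d h1 h2 l1 l2 l3 l4
    rcases h.cover c d with g | g | ⟨k, g⟩
    · exact (h.UM j _ _ (h.Udown _ _ _ _ l1 l3 g) h1).elim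
    · exact (h.SM j _ _ (h.Sup _ _ _ _ l2 l4 g) h2).elim
    · rwa [h.Meq _ _ _ _ _ _ l1 l3 h1 g]
  -- every point has a one-sided neighbourhood of constant label
  have oneSided : ∀ t, ∃ ε > 0, (∀ s, t ≤ s → s < t + ε → T s = T t) ∨
      (∀ s, t - ε < s → s ≤ t → T s = T t) := by
    intro t
    have h0 := hT t
    obtain ⟨p, q, hne, hcmp, hm⟩ := h.Mnontriv _ _ _ h0
    by_cases hp : p = t + B t
    · have hq : q ≠ B t := by tauto
      rcases lt_or_gt_of_ne hq with g | g
      · refine ⟨B t - q, by linarith, Or.inl fun s h1 h2 => ?_⟩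
        have := key _ _ _ (box _ _ _ _ _ p (p - s) hm h0 (by linarith) (by linarith)
          (by linarith) (by linarith))
        rw [this]; congr 1; ring
      · refine ⟨q - B t, by linarith, Or.inr fun s h1 h2 => ?_⟩
        have := key _ _ _ (box _ _ _ _ _ p (p - s) h0 hm (by linarith) (by linarith)
          (by linarith) (by linarith))
        rw [this]; congr 1; ring
    · rcases lt_or_gt_of_ne hp with g | g
      · have hq : q ≤ B t := by
          rcases hcmp with h1 | h1
          · linarith [h1.1]
          · exact h1.2
        refine ⟨t + B t - p, by linarith, Or.inr fun s h1 h2 => ?_⟩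
        have := key _ _ _ (box _ _ _ _ _ (s + B t) (B t) hm h0 (by linarith) (by linarith)
          (by linarith) (by linarith))
        rw [this]; congr 1; ring
      · have hq : B t ≤ q := by
          rcases hcmp with h1 | h1
          · exact h1.2
          · linarith [h1.1]
        refine ⟨p - (t + B t), by linarith, Or.inl fun s h1 h2 => ?_⟩
        have := key _ _ _ (box _ _ _ _ _ (s + B t) (B t) h0 hm (by linarith) (by linarith)
          (by linarith) (by linarith))
        rw [this]; congr 1; ring
  have noL : ∀ t ε k, 0 < ε → (∀ s, t - ε < s → s < t → T s = k) → k = T t := by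
    intro t ε k he hs
    by_contra hne
    refine h.noLeft (T t) k (Ne.symm hne) _ _ ε he (hT t) ?_
    intro j a' b' h1 h2 hm
    rw [key _ _ _ hm]
    exact hs _ (by linarith) (by linarith)
  have noR : ∀ t ε k, 0 < ε → (∀ s, t < s → s < t + ε → T s = k) → k = T t := by
    intro t ε k he hs
    by_contra hne
    refine h.noRight (T t) k (Ne.symm hne) _ _ ε he (hT t) ?_
    intro j a' b' h1 h2 hm
    rw [key _ _ _ hm]
    exact hs _ (by linarith) (by linarith)
  -- the set where the label is not locally constant
  let O : Set ℝ := {t | ∀ᶠ s in nhds t, T s = T t}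
  have hO : IsOpen O := by
    rw [isOpen_iff_mem_nhds]
    intro t ht
    have h2 : ∀ᶠ s in nhds t, ∀ᶠ r in nhds s, T r = T t := eventually_eventually_nhds.2 ht
    filter_upwards [h2] with s hs
    have := hs.self_of_nhds
    simp only [O, Set.mem_ofPred_eq, this]
    exact hs
  -- constancy on preconnected subsets of O
  have hconst : ∀ a b, Set.Ioo a b ⊆ O → ∃ k, ∀ s ∈ Set.Ioo a b, T s = k := by
    intro a b hab
    by_cases hne : (Set.Ioo a b).Nonempty
    · obtain ⟨c, hc⟩ := hne
      refine ⟨T c, fun s hs => ?_⟩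
      refine isPreconnected_Ioo.constant (f := T) ?_ hs hc
      intro x hx
      have : ∀ᶠ s in nhds x, T s = T x := hab hx
      exact (ContinuousAt.congr (continuousAt_const (y := T x))
        (this.mono fun _ e => e.symm)).continuousWithinAt
    · exact ⟨0, fun s hs => (hne ⟨s, hs⟩).elim⟩
  have hcl : IsClosed Oᶜ := hO.isClosed_compl
  have hcount : (Oᶜ).Countable := by
    have h1 := countable_setOfPred_isolated_right_within (s := Oᶜ)
    have h2 := countable_setOfPred_isolated_left_within (s := Oᶜ)
    refine (h1.union h2).mono ?_
    intro t ht
    obtain ⟨ε, he, hR | hL⟩ := oneSided t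
    · left
      refine ⟨ht, ?_⟩
      rw [← Filter.empty_mem_iff_bot, mem_nhdsWithin_iff_exists_mem_nhds_inter]
      refine ⟨Set.Ioo (t - ε) (t + ε), Ioo_mem_nhds (by linarith) (by linarith), ?_⟩
      rintro s ⟨hs3, hs, hs4⟩
      have hs2 : s ∈ Set.Ioo t (t + ε) := ⟨hs4, hs3.2⟩
      apply hs
      filter_upwards [Ioo_mem_nhds hs2.1 hs2.2] with r hr
      rw [hR r hr.1.le hr.2, hR s hs2.1.le hs2.2]
    · right
      refine ⟨ht, ?_⟩
      rw [← Filter.empty_mem_iff_bot, mem_nhdsWithin_iff_exists_mem_nhds_inter]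
      refine ⟨Set.Ioo (t - ε) (t + ε), Ioo_mem_nhds (by linarith) (by linarith), ?_⟩
      rintro s ⟨hs3, hs, hs4⟩
      have hs2 : s ∈ Set.Ioo (t - ε) t := ⟨hs3.1, hs4⟩
      apply hs
      filter_upwards [Ioo_mem_nhds hs2.1 hs2.2] with r hr
      rw [hL r hr.1 hr.2.le, hL s hs2.1 hs2.2.le]
  have hnonempty : (Oᶜ).Nonempty := by
    by_contra hemp
    have huniv : ∀ t, t ∈ O := by
      intro t
      by_contra ht
      exact hemp ⟨t, ht⟩
    obtain ⟨a, b, -, -, hU⟩ := h.Uex 0 0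
    obtain ⟨a0, b0, -, -, h0⟩ := h.Usee _ _ hU 0
    obtain ⟨a1, b1, -, -, h1⟩ := h.Usee _ _ hU 1
    have lc : IsLocallyConstant T := (IsLocallyConstant.iff_eventually_eq T).2 huniv
    have e0 := key _ _ _ h0
    have e1 := key _ _ _ h1
    rw [lc.apply_eq_of_preconnectedSpace (a1 - b1) (a0 - b0), ← e0] at e1
    simp at e1
  have hnoiso : ∀ t ∈ Oᶜ, ∀ ε > 0, ∃ s ∈ Oᶜ, s ≠ t ∧ |s - t| < ε := by
    intro t ht ε he
    by_contra hno
    push Not at hno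
    have hin : ∀ s, s ≠ t → |s - t| < ε → s ∈ O := by
      intro s h1 h2
      by_contra h3
      exact absurd h2 (not_lt.2 (hno s h3 h1))
    obtain ⟨k, hk⟩ := hconst (t - ε) t (fun s hs => hin s hs.2.ne
      (by rw [abs_lt]; constructor <;> linarith [hs.1, hs.2]))
    obtain ⟨l, hl⟩ := hconst t (t + ε) (fun s hs => hin s hs.1.ne'
      (by rw [abs_lt]; constructor <;> linarith [hs.1, hs.2]))
    have ek := noL t ε k he (fun s h1 h2 => hk s ⟨h1, h2⟩)
    have el := noR t ε l he (fun s h1 h2 => hl s ⟨h1, h2⟩)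
    apply ht
    filter_upwards [Ioo_mem_nhds (show t - ε < t by linarith) (show t < t + ε by linarith)]
      with s hs
    rcases lt_trichotomy s t with g | g | g
    · rw [hk s ⟨hs.1, g⟩, ek]
    · rw [g]
    · rw [hl s ⟨g, hs.2⟩, el]
  have hperf : Perfect Oᶜ := by
    refine ⟨hcl, ?_⟩
    intro t ht
    rw [accPt_iff_nhds]
    intro V hV
    obtain ⟨ε, he, hb⟩ := Metric.mem_nhds_iff.1 hV
    obtain ⟨s, hs, hne, hlt⟩ := hnoiso t ht ε he
    exact ⟨s, ⟨hb (by simpa [Real.dist_eq] using hlt), hs⟩, hne⟩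
  obtain ⟨f, hf1, -, hf2⟩ := hperf.exists_nat_bool_injection hnonempty
  have : (Set.univ : Set (ℕ → Bool)).Countable := by
    have h1 : (Set.range f).Countable := hcount.mono hf1
    have := h1.preimage_of_injOn (f := f) hf2.injOn
    simpa using this
  rw [Set.countable_univ_iff] at this
  have hle := Cardinal.mk_le_aleph0 (α := ℕ → Bool)
  rw [mk_nat_bool] at hle
  exact absurd hle (not_le.2 Cardinal.aleph0_lt_continuum)

end Cfg

theorem no_real (f : ℝ × ℝ → Fin 10)
    (h : BiMorph (fun p q : ℝ × ℝ => p ≤ q) 10 ltP1 f) : False := by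
  have mono : ∀ a b a' b', a ≤ a' → b ≤ b' → (f (a, b)).val ≠ (f (a', b')).val →
      ltP1 (f (a, b)) (f (a', b')) = true := by
    intro a b a' b' h1 h2 hne
    exact h.mono _ _ (Prod.mk_le_mk.2 ⟨h1, h2⟩) (fun e => hne (by rw [e]))
  have up : ∀ a b (q : Fin 10), q ≠ f (a, b) → ltP1 (f (a, b)) q = true →
      ∃ a' b', a ≤ a' ∧ b ≤ b' ∧ f (a', b') = q := by
    intro a b q h1 h2
    obtain ⟨⟨a', b'⟩, h3, h4⟩ := h.up _ q h1 h2
    exact ⟨a', b', (Prod.mk_le_mk.1 h3).1, (Prod.mk_le_mk.1 h3).2, h4⟩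
  have down : ∀ a b (q : Fin 10), q ≠ f (a, b) → ltP1 q (f (a, b)) = true →
      ∃ a' b', a' ≤ a ∧ b' ≤ b ∧ f (a', b') = q := by
    intro a b q h1 h2
    obtain ⟨⟨a', b'⟩, h3, h4⟩ := h.down _ q h1 h2
    exact ⟨a', b', (Prod.mk_le_mk.1 h3).1, (Prod.mk_le_mk.1 h3).2, h4⟩
  have hlt : ∀ a b : Fin 10, ltP1 a b = true ↔ ((a.val = 0 ∧ b.val ≠ 0) ∨ (b.val = 1 ∧ a.val ≠ 1)
      ∨ (a.val % 2 = 0 ∧ 2 ≤ a.val ∧ b.val = a.val + 1)) := by decide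
  refine Cfg.false (U := fun a b => (f (a, b)).val = 0) (S := fun a b => (f (a, b)).val = 1)
    (M := fun j a b => (f (a, b)).val / 2 = j.val + 1) ?_
  constructor
  · intro a b
    by_cases h0 : (f (a, b)).val = 0
    · exact Or.inl h0
    by_cases h1 : (f (a, b)).val = 1
    · exact Or.inr (Or.inl h1)
    · exact Or.inr (Or.inr ⟨⟨(f (a, b)).val / 2 - 1, by omega⟩, by simp only; omega⟩)
  · intro a b h1 h2; omega
  · intro j a b h1 h2; omega
  · intro j a b h1 h2; omega
  · intro a b a' b' h1 h2 h3
    by_contra hne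
    have := mono a b a' b' h1 h2 (by omega)
    rw [hlt] at this; omega
  · intro a b a' b' h1 h2 h3
    by_contra hne
    have := mono a b a' b' h1 h2 (by omega)
    rw [hlt] at this; omega
  · intro i j a b a' b' h1 h2 h3 h4
    by_contra hne
    have hne : i.val ≠ j.val := fun e => hne (Fin.ext e)
    have := mono a b a' b' h1 h2 (by omega)
    rw [hlt] at this; omega
  · intro a b h1 j
    obtain ⟨a', b', l1, l2, e⟩ := up a b ⟨2 * j.val + 2, by omega⟩
      (by rw [Ne, Fin.ext_iff]; simp only; omega) (by rw [hlt]; simp only; omega)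
    exact ⟨a', b', l1, l2, by rw [e]; simp only; omega⟩
  · intro a b h1 j
    obtain ⟨a', b', l1, l2, e⟩ := down a b ⟨2 * j.val + 2, by omega⟩
      (by rw [Ne, Fin.ext_iff]; simp only; omega) (by rw [hlt]; simp only; omega)
    exact ⟨a', b', l1, l2, by rw [e]; simp only; omega⟩
  · intro j a b h1
    have h1 : (f (a, b)).val / 2 = j.val + 1 := h1
    by_cases hp : (f (a, b)).val % 2 = 0
    · obtain ⟨a', b', l1, l2, e⟩ := up a b ⟨2 * j.val + 3, by omega⟩
        (by rw [Ne, Fin.ext_iff]; simp only; omega) (by rw [hlt]; simp only; omega)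
      refine ⟨a', b', ?_, Or.inl ⟨l1, l2⟩, by rw [e]; simp only; omega⟩
      by_contra hcon
      push Not at hcon
      rw [hcon.1, hcon.2] at e
      rw [e] at hp; simp only at hp; omega
    · obtain ⟨a', b', l1, l2, e⟩ := down a b ⟨2 * j.val + 2, by omega⟩
        (by rw [Ne, Fin.ext_iff]; simp only; omega) (by rw [hlt]; simp only; omega)
      refine ⟨a', b', ?_, Or.inr ⟨l1, l2⟩, by rw [e]; simp only; omega⟩
      by_contra hcon
      push Not at hcon
      rw [hcon.1, hcon.2] at e
      rw [e] at hp; simp only at hp; omega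
  · intro a b
    by_cases h0 : (f (a, b)).val = 0
    · exact ⟨a, b, le_rfl, le_rfl, h0⟩
    · obtain ⟨a', b', l1, l2, e⟩ := down a b ⟨0, by omega⟩
        (by rw [Ne, Fin.ext_iff]; simp only; omega) ((hlt _ _).2 (Or.inl ⟨rfl, h0⟩))
      exact ⟨a', b', l1, l2, by rw [e]⟩
  · intro a b
    by_cases h0 : (f (a, b)).val = 1
    · exact ⟨a, b, le_rfl, le_rfl, h0⟩
    · obtain ⟨a', b', l1, l2, e⟩ := up a b ⟨1, by omega⟩
        (by rw [Ne, Fin.ext_iff]; simp only; omega) ((hlt _ _).2 (Or.inr (Or.inl ⟨rfl, h0⟩)))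
      exact ⟨a', b', l1, l2, by rw [e]⟩


theorem exists_collapse : ∃ h : ℚ → ℚ, Monotone h ∧ (∀ x, ∃ y < x, h y = h x) ∧
    (∀ q, ∃ x, h x = q) := by
  have : Countable (ℚ ×ₗ ℚ) := inferInstanceAs (Countable (ℚ × ℚ))
  obtain ⟨e⟩ := Order.iso_of_countable_dense ℚ (ℚ ×ₗ ℚ)
  refine ⟨fun x => (ofLex (e x)).1, ?_, ?_, ?_⟩
  · intro x y hxy
    have := e.monotone hxy
    rcases Prod.Lex.le_iff.1 this with g | g
    · exact g.le
    · exact g.1.le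
  · intro x
    refine ⟨e.symm (toLex ((ofLex (e x)).1, (ofLex (e x)).2 - 1)), ?_, by simp⟩
    rw [OrderIso.symm_apply_lt]
    rw [Prod.Lex.lt_iff]
    right
    simp
  · intro q
    exact ⟨e.symm (toLex (q, 0)), by simp⟩

theorem exists_label : ∃ l : ℚ → Fin 4, ∀ x y, x < y → ∀ j, ∃ z, x < z ∧ z < y ∧ l z = j := by
  refine ⟨fun q => ⟨((padicValRat 2 q) % 4).toNat, by omega⟩, ?_⟩
  intro x y hxy j
  obtain ⟨n, hn⟩ := pow_unbounded_of_one_lt (4 / (y - x)) (one_lt_two (α := ℚ))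
  -- exponent `N ≥ n` with `-N ≡ j mod 4`
  obtain ⟨N, hN, hj⟩ : ∃ N : ℕ, n ≤ N ∧ (-(N : ℤ)) % 4 = j.val :=
    ⟨4 * n + (4 - j.val), by omega, by have := j.2; omega⟩
  have hpos : (0 : ℚ) < 2 ^ N := by positivity
  have hbig : 4 < (y - x) * 2 ^ N := by
    have h1 : (2 : ℚ) ^ n ≤ 2 ^ N := pow_le_pow_right₀ (by norm_num) hN
    have h2 := (div_lt_iff₀ (sub_pos.2 hxy)).1 hn
    nlinarith [sub_pos.2 hxy]
  set m : ℤ := 2 * ⌊x * 2 ^ N / 2⌋ + 3 with hm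
  have f1 := Int.floor_le (x * 2 ^ N / 2)
  have f2 := Int.lt_floor_add_one (x * 2 ^ N / 2)
  have m1 : x * 2 ^ N < m := by rw [hm]; push_cast; linarith
  have m2 : (m : ℚ) < y * 2 ^ N := by rw [hm]; push_cast; linarith
  refine ⟨m / 2 ^ N, by rwa [lt_div_iff₀ hpos], by rwa [div_lt_iff₀ hpos], ?_⟩
  have hm0 : (m : ℚ) ≠ 0 := by
    have : m ≠ 0 := by omega
    exact_mod_cast this
  have hv : padicValRat 2 ((m : ℚ) / 2 ^ N) = -(N : ℤ) := by
    rw [div_eq_mul_inv, padicValRat.mul hm0 (by positivity)]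
    have e1 := padicValRat.self_pow_inv (p := 2) N
    push_cast at e1
    rw [e1, padicValRat.of_int, padicValInt.eq_zero_of_not_dvd (by omega)]
    simp
  apply Fin.ext
  simp only [hv, hj]
  simp

theorem yes_rat : ∃ f : ℚ × ℚ → Fin 10, BiMorph (fun p q : ℚ × ℚ => p ≤ q) 10 ltP1 f := by
  obtain ⟨h, hmono, hlow, hsurj⟩ := exists_collapse
  obtain ⟨l, hl⟩ := exists_label
  have hlt : ∀ a b : Fin 10, ltP1 a b = true ↔ ((a.val = 0 ∧ b.val ≠ 0) ∨ (b.val = 1 ∧ a.val ≠ 1)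
      ∨ (a.val % 2 = 0 ∧ 2 ≤ a.val ∧ b.val = a.val + 1)) := by decide
  obtain ⟨f, fp, fm, f0, f1⟩ : ∃ f : ℚ × ℚ → Fin 10,
      (∀ a b, h a = h (-b) → 0 ≤ a + b → (f (a, b)).val = 2 * (l (h a)).val + 3) ∧
      (∀ a b, h a = h (-b) → a + b < 0 → (f (a, b)).val = 2 * (l (h a)).val + 2) ∧
      (∀ a b, h a < h (-b) → (f (a, b)).val = 0) ∧
      (∀ a b, h (-b) < h a → (f (a, b)).val = 1) := by
    refine ⟨fun p => if h p.1 = h (-p.2) then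
        (if 0 ≤ p.1 + p.2 then ⟨2 * (l (h p.1)).val + 3, by omega⟩
          else ⟨2 * (l (h p.1)).val + 2, by omega⟩)
        else if h p.1 < h (-p.2) then 0 else 1, ?_, ?_, ?_, ?_⟩
    · intro a b h1 h2; simp only [h1, h2, if_true]
    · intro a b h1 h2; simp only [h1, not_le.2 h2, if_true, if_false]
    · intro a b h1; simp [h1, h1.ne]
    · intro a b h1; simp [h1.ne', not_lt.2 h1.le]
  have cases4 : ∀ a b, (h a = h (-b) ∧ 0 ≤ a + b) ∨ (h a = h (-b) ∧ a + b < 0) ∨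
      h a < h (-b) ∨ h (-b) < h a := by
    intro a b
    rcases lt_trichotomy (h a) (h (-b)) with g | g | g
    · tauto
    · rcases le_or_gt 0 (a + b) with g' | g' <;> tauto
    · tauto
  have lt_of : ∀ {x y}, h x < h y → x < y := fun {x y} g => hmono.reflect_lt g
  have seeS : ∀ a b, ∃ a' b', a ≤ a' ∧ b ≤ b' ∧ (f (a', b')).val = 1 := by
    intro a b
    obtain ⟨w, hw⟩ := hsurj (max (h a) (h (-b)) + 1)
    refine ⟨w, b, (lt_of ?_).le, le_rfl, f1 _ _ ?_⟩
    · rw [hw]; linarith [le_max_left (h a) (h (-b))]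
    · rw [hw]; linarith [le_max_right (h a) (h (-b))]
  have seeU : ∀ a b, ∃ a' b', a' ≤ a ∧ b' ≤ b ∧ (f (a', b')).val = 0 := by
    intro a b
    obtain ⟨w, hw⟩ := hsurj (min (h a) (h (-b)) - 1)
    refine ⟨w, b, (lt_of ?_).le, le_rfl, f0 _ _ ?_⟩
    · rw [hw]; linarith [min_le_left (h a) (h (-b))]
    · rw [hw]; linarith [min_le_right (h a) (h (-b))]
  -- between two different classes all middle labels are seen
  have between : ∀ x y, h x < h y → ∀ q : Fin 10, 2 ≤ q.val → ∃ a b,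
      x ≤ a ∧ a ≤ y ∧ x ≤ -b ∧ -b ≤ y ∧ f (a, b) = q := by
    intro x y hxy q hq
    obtain ⟨z, h1, h2, h3⟩ := hl _ _ hxy ⟨q.val / 2 - 1, by omega⟩
    obtain ⟨w, rfl⟩ := hsurj z
    have h3' := congrArg Fin.val h3
    simp only at h3'
    by_cases hpar : q.val % 2 = 0
    · obtain ⟨w', hw', e⟩ := hlow w
      refine ⟨w', -w, (lt_of (by rwa [e])).le, by linarith [lt_of h2], by linarith [lt_of h1],
        by linarith [lt_of h2], Fin.ext ?_⟩
      rw [fm _ _ (by rw [neg_neg, e]) (by linarith), e]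
      omega
    · refine ⟨w, -w, (lt_of h1).le, (lt_of h2).le, by linarith [lt_of h1],
        by linarith [lt_of h2], Fin.ext ?_⟩
      rw [fp _ _ (by rw [neg_neg]) (by linarith)]
      omega
  refine ⟨f, ?_, ?_, ?_⟩
  · rintro ⟨a, b⟩ ⟨a', b'⟩ hle hne
    obtain ⟨ha, hb⟩ := Prod.mk_le_mk.1 hle
    have hne : (f (a, b)).val ≠ (f (a', b')).val := fun e => hne (Fin.ext e)
    have k1 := hmono ha
    have k2 := hmono (neg_le_neg hb)
    rw [hlt]
    rcases cases4 a b with ⟨g1, g2⟩ | ⟨g1, g2⟩ | g | g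
    · have e := fp a b g1 g2
      rcases cases4 a' b' with ⟨g1', g2'⟩ | ⟨g1', g2'⟩ | g' | g'
      · have e' := fp a' b' g1' g2'
        have : h a' = h a := le_antisymm (by linarith) k1
        rw [this] at e'; omega
      · linarith
      · linarith
      · have e' := f1 a' b' g'; omega
    · have e := fm a b g1 g2
      rcases cases4 a' b' with ⟨g1', g2'⟩ | ⟨g1', g2'⟩ | g' | g'
      · have e' := fp a' b' g1' g2'
        have : h a' = h a := le_antisymm (by linarith) k1
        rw [this] at e'; omega
      · have e' := fm a' b' g1' g2'
        have : h a' = h a := le_antisymm (by linarith) k1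
        rw [this] at e'; omega
      · linarith
      · have e' := f1 a' b' g'; omega
    · have e := f0 a b g; omega
    · have e := f1 a b g
      have e' := f1 a' b' (by linarith)
      omega
  · rintro ⟨a, b⟩ q hq hql
    have hq : q.val ≠ (f (a, b)).val := fun e => hq (Fin.ext e)
    rw [hlt] at hql
    suffices ∃ a' b', a ≤ a' ∧ b ≤ b' ∧ f (a', b') = q by
      obtain ⟨a', b', h1, h2, h3⟩ := this
      exact ⟨(a', b'), Prod.mk_le_mk.2 ⟨h1, h2⟩, h3⟩
    by_cases q1 : q.val = 1
    · obtain ⟨a', b', h1, h2, h3⟩ := seeS a b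
      exact ⟨a', b', h1, h2, Fin.ext (by omega)⟩
    rcases cases4 a b with ⟨g1, g2⟩ | ⟨g1, g2⟩ | g | g
    · have e := fp a b g1 g2; omega
    · have e := fm a b g1 g2
      refine ⟨a, -a, le_rfl, by linarith, Fin.ext ?_⟩
      rw [fp _ _ (by rw [neg_neg]) (by linarith)]
      omega
    · have e := f0 a b g
      obtain ⟨a', b', h1, h2, h3, h4, h5⟩ := between _ _ g q (by omega)
      exact ⟨a', b', h1, by linarith, h5⟩
    · have e := f1 a b g; omega
  · rintro ⟨a, b⟩ q hq hql
    have hq : q.val ≠ (f (a, b)).val := fun e => hq (Fin.ext e)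
    rw [hlt] at hql
    suffices ∃ a' b', a' ≤ a ∧ b' ≤ b ∧ f (a', b') = q by
      obtain ⟨a', b', h1, h2, h3⟩ := this
      exact ⟨(a', b'), Prod.mk_le_mk.2 ⟨h1, h2⟩, h3⟩
    by_cases q1 : q.val = 0
    · obtain ⟨a', b', h1, h2, h3⟩ := seeU a b
      exact ⟨a', b', h1, h2, Fin.ext (by omega)⟩
    rcases cases4 a b with ⟨g1, g2⟩ | ⟨g1, g2⟩ | g | g
    · have e := fp a b g1 g2
      obtain ⟨w, hw, ew⟩ := hlow (-b)
      refine ⟨w, b, by linarith, le_rfl, Fin.ext ?_⟩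
      rw [fm _ _ ew (by linarith), ew, ← g1]
      omega
    · have e := fm a b g1 g2; omega
    · have e := f0 a b g; omega
    · have e := f1 a b g
      obtain ⟨a', b', h1, h2, h3, h4, h5⟩ := between _ _ g q (by omega)
      exact ⟨a', b', h2, by linarith, h5⟩

theorem dir_le {α : Type*} [Lattice α] (x y : α × α) : ∃ z, x ≤ z ∧ y ≤ z :=
  ⟨x ⊔ y, le_sup_left, le_sup_right⟩

theorem dir_lt {α : Type*} [Field α] [LinearOrder α] [IsStrictOrderedRing α] (x y : α × α) :
    ∃ z, (x ≤ z ∧ x ≠ z) ∧ (y ≤ z ∧ y ≠ z) := by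
  have h1 := le_max_left x.1 y.1
  have h2 := le_max_right x.1 y.1
  have h3 := le_max_left x.2 y.2
  have h4 := le_max_right x.2 y.2
  refine ⟨(max x.1 y.1 + 1, max x.2 y.2), ⟨Prod.le_def.2 ⟨?_, h3⟩, ?_⟩,
    ⟨Prod.le_def.2 ⟨?_, h4⟩, ?_⟩⟩
  · simp only; linarith
  · intro e
    have := congrArg Prod.fst e
    simp only at this; linarith
  · simp only; linarith
  · intro e
    have := congrArg Prod.fst e
    simp only at this; linarith


/-- The formula `Δ(P₁)` is satisfiable over `(ℚ², ≤)` and `(ℚ², <)`, but not over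
`(ℝ², ≤)` nor `(ℝ², <)`, where `≤` is the componentwise order and `<` its
irreflexive part. -/
theorem delta_P1_distinguishes_rational_from_real :
    TSatisfiable (fun p q : ℚ × ℚ => p ≤ q) (delta 10 ltP1) ∧
    TSatisfiable (fun p q : ℚ × ℚ => p ≤ q ∧ p ≠ q) (delta 10 ltP1) ∧
    ¬ TSatisfiable (fun p q : ℝ × ℝ => p ≤ q) (delta 10 ltP1) ∧
    ¬ TSatisfiable (fun p q : ℝ × ℝ => p ≤ q ∧ p ≠ q) (delta 10 ltP1) := by
  rw [sat_iff_biMorph _ dir_le, sat_iff_biMorph _ dir_lt, sat_iff_biMorph _ dir_le,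
    sat_iff_biMorph _ dir_lt]
  simp only [biMorph_strict]
  exact ⟨yes_rat, yes_rat, fun ⟨f, hf⟩ => no_real f hf, fun ⟨f, hf⟩ => no_real f hf⟩

end Temporal
end
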